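/- Let D be a strictly convex planar domain whose boundary is parametrized by a smooth ℓ-periodic curve γ: ℝ → ℝ², injective on [0,ℓ), positively oriented, with ω(γ'(t),γ''(t)) > 0 for all t. Suppose the symplectic billiard in D is without conjugate points, i.e. for every symplectic billiard configuration (tₙ)_{n∈ℤ} and every Jacobi field (ξₙ)_{n∈ℤ} along it that is not identically zero, there do not exist indices M < N with ξ_M = 0 and ξ_N = 0. Then the image of γ is an ellipse, i.e. the image of the unit circle under an invertible affine transformation of ℝ². -/

import Mathlib

open Set

/-- The standard area form on ℝ². -/
noncomputable def om (u v : ℝ × ℝ) : ℝ := u.1 * v.2 - v.1 * u.2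

/-- L₁₁(t₁,t₂) = ω(γ''(t₁), γ(t₂)). -/
noncomputable def L11 (γ : ℝ → ℝ × ℝ) (t₁ t₂ : ℝ) : ℝ := om (deriv (deriv γ) t₁) (γ t₂)

/-- L₂₂(t₁,t₂) = ω(γ(t₁), γ''(t₂)). -/
noncomputable def L22 (γ : ℝ → ℝ × ℝ) (t₁ t₂ : ℝ) : ℝ := om (γ t₁) (deriv (deriv γ) t₂)

/-- L₁₂(t₁,t₂) = ω(γ'(t₁), γ'(t₂)). -/
noncomputable def L12 (γ : ℝ → ℝ × ℝ) (t₁ t₂ : ℝ) : ℝ := om (deriv γ t₁) (deriv γ t₂)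

/-- A symplectic billiard configuration: the phase-space condition and the reflection law. -/
def IsConfiguration (γ : ℝ → ℝ × ℝ) (t : ℤ → ℝ) : Prop :=
  (∀ n : ℤ, 0 < om (deriv γ (t n)) (deriv γ (t (n + 1)))) ∧
  (∀ n : ℤ, om (deriv γ (t n)) (γ (t (n + 1)) - γ (t (n - 1))) = 0)

/-- A Jacobi field along a configuration. -/
def IsJacobiField (γ : ℝ → ℝ × ℝ) (t : ℤ → ℝ) (ξ : ℤ → ℝ) : Prop :=
  ∀ n : ℤ, L12 γ (t (n - 1)) (t n) * ξ (n - 1)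
    + (L22 γ (t (n - 1)) (t n) + L11 γ (t n) (t (n + 1))) * ξ n
    + L12 γ (t n) (t (n + 1)) * ξ (n + 1) = 0

/-- The unit circle in ℝ². -/
def unitCircle : Set (ℝ × ℝ) := {p : ℝ × ℝ | p.1 ^ 2 + p.2 ^ 2 = 1}

/-!
By strict convexity the curve can be parametrized by its tangent angle `φ`, with radius of curvature
`ρ`; here `φ` increases by exactly `2π` over a period because the curve is simple. The billiard map
preserves an area form on the space of chords. Without conjugate points, the Jacobi field with
values `0, 1` at two consecutive points of an orbit stays positive. The ratios of its consecutive
values solve a discrete Riccati equation, and the AM-GM inequality then bounds twice the sum of the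
off-diagonal coefficients of the Jacobi equation along a piece of the orbit by the sum of the
diagonal ones, up to boundary terms. Integrating over all chords turns this into `L² ≤ 4πA` for the
length `L` and the area `A` of the curve, provided the integrals of `ρ φ * cos (2 * φ)` and
`ρ φ * sin (2 * φ)` over a period vanish. These integrals are the first variation of the length
under area preserving linear maps, which do not affect the billiard, so they vanish for the shortest
linear image of the curve of the given area. That image attains equality in the isoperimetric
inequality, so it is a circle.
-/

namespace SymplecticBilliard

open Real Filter Topology MeasureTheory

lemma om_apply (u v : ℝ × ℝ) : om u v = u.1 * v.2 - v.1 * u.2 := rfl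

lemma integral_swap_of_continuous {f : ℝ → ℝ → ℝ} (hf : Continuous (Function.uncurry f))
    (a b c d : ℝ) : ∫ x in a..b, ∫ y in c..d, f x y = ∫ y in c..d, ∫ x in a..b, f x y :=
  intervalIntegral_intervalIntegral_swap <|
    (hf.continuousOn.integrableOn_compact (isCompact_uIcc.prod isCompact_uIcc)).mono_set
      (prod_mono uIoc_subset_uIcc uIoc_subset_uIcc)

lemma continuous_of_isClosed_graph_of_isCompact {X Y : Type*} [TopologicalSpace X]
    [TopologicalSpace Y] {f : X → Y} {K : Set Y} (hK : IsCompact K) (hfK : ∀ x, f x ∈ K)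
    {S : Set (X × Y)} (hS : IsClosed S) (hgraph : ∀ x, ∀ y ∈ K, (x, y) ∈ S ↔ y = f x) :
    Continuous f := by
  refine continuous_iff_continuousAt.2 fun x => ?_
  refine hK.tendsto_nhds_of_unique_mapClusterPt (Eventually.of_forall hfK) fun y hy hclus => ?_
  refine (hgraph x y hy).1 (isClosed_iff_clusterPt.1 hS (x, y) ?_)
  have hpair : MapClusterPt (x, y) (𝓝 x) fun x' => (x', f x') := by
    refine mapClusterPt_iff_frequently.2 fun s hs => ?_
    obtain ⟨a, ha, b, hb, hab⟩ := mem_nhds_prod_iff.1 hs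
    exact ((mapClusterPt_iff_frequently.1 hclus b hb).and_eventually ha).mono
      fun x' hx' => hab ⟨hx'.2, hx'.1⟩
  refine ClusterPt.mono hpair (le_principal_iff.2 (mem_map.2 ?_))
  exact Eventually.of_forall fun x' => (hgraph x' (f x') (hfK x')).2 rfl

lemma continuous_invFunOn_of_isCompact {X Y Z : Type*} [TopologicalSpace X] [TopologicalSpace Y]
    [TopologicalSpace Z] [T2Space Z] [Nonempty Y] {f : X → Y → Z} {g : X → Z} {K : Set Y}
    (hK : IsCompact K) (hf : Continuous (Function.uncurry f)) (hg : Continuous g)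
    (hinj : ∀ x, InjOn (f x) K) (hmem : ∀ x, g x ∈ f x '' K) :
    Continuous fun x => Function.invFunOn (f x) K (g x) := by
  refine continuous_of_isClosed_graph_of_isCompact hK
    (fun x => Function.invFunOn_mem (hmem x))
    (isClosed_eq hf (hg.comp continuous_fst)) fun x y hy => ⟨fun hxy => ?_, ?_⟩
  · exact hinj x hy (Function.invFunOn_mem (hmem x))
      (hxy.trans (Function.invFunOn_eq (hmem x)).symm)
  · rintro rfl
    exact Function.invFunOn_eq (hmem x)

/-- The unit vector with direction angle `φ`. -/
noncomputable def dir (φ : ℝ) : ℝ × ℝ := (cos φ, sin φ)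

/-- The component of `Γ ψ` along the left normal of the direction `φ`. -/
noncomputable def height (Γ : ℝ → ℝ × ℝ) (φ ψ : ℝ) : ℝ := om (dir φ) (Γ ψ)

/-- The component of `Γ ψ` along the direction `φ`. -/
noncomputable def along (Γ : ℝ → ℝ × ℝ) (φ ψ : ℝ) : ℝ := cos φ * (Γ ψ).1 + sin φ * (Γ ψ).2

/-- `Γ` is a `T`-periodic strictly convex curve parametrized by its tangent angle, and `ρ` is its
radius of curvature. A simple closed curve has `T = 2 * π`. -/
structure IsTangentAngleParam (T : ℝ) (ρ : ℝ → ℝ) (Γ : ℝ → ℝ × ℝ) : Prop where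
  pos : ∀ φ, 0 < ρ φ
  continuous_radius : Continuous ρ
  hasDerivAt : ∀ φ, HasDerivAt Γ (ρ φ • dir φ) φ
  periodic : Function.Periodic Γ T

lemma height_eq (Γ : ℝ → ℝ × ℝ) (φ ψ : ℝ) :
    height Γ φ ψ = cos φ * (Γ ψ).2 - (Γ ψ).1 * sin φ := rfl

lemma eq_of_height_eq_of_along_eq {Γ : ℝ → ℝ × ℝ} {φ ψ₁ ψ₂ : ℝ}
    (hheight : height Γ φ ψ₁ = height Γ φ ψ₂) (halong : along Γ φ ψ₁ = along Γ φ ψ₂) :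
    Γ ψ₁ = Γ ψ₂ := by
  simp only [height_eq, along] at hheight halong
  ext
  · linear_combination cos φ * halong - sin φ * hheight
      + ((Γ ψ₂).1 - (Γ ψ₁).1) * sin_sq_add_cos_sq φ
  · linear_combination sin φ * halong + cos φ * hheight
      + ((Γ ψ₂).2 - (Γ ψ₁).2) * sin_sq_add_cos_sq φ

lemma height_add_two_pi_left (Γ : ℝ → ℝ × ℝ) (φ : ℝ) : height Γ (φ + 2 * π) = height Γ φ := by
  funext ψ
  simp [height_eq]

lemma along_add_two_pi_left (Γ : ℝ → ℝ × ℝ) (φ : ℝ) : along Γ (φ + 2 * π) = along Γ φ := by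
  funext ψ
  simp [along]

namespace IsTangentAngleParam

variable {T : ℝ} {ρ : ℝ → ℝ} {Γ : ℝ → ℝ × ℝ}

@[fun_prop]
lemma continuous (h : IsTangentAngleParam T ρ Γ) : Continuous Γ :=
  continuous_iff_continuousAt.2 fun φ => (h.hasDerivAt φ).continuousAt

lemma hasDerivAt_fst (h : IsTangentAngleParam T ρ Γ) (φ : ℝ) :
    HasDerivAt (fun ψ => (Γ ψ).1) (ρ φ * cos φ) φ :=
  (h.hasDerivAt φ).fst

lemma hasDerivAt_snd (h : IsTangentAngleParam T ρ Γ) (φ : ℝ) :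
    HasDerivAt (fun ψ => (Γ ψ).2) (ρ φ * sin φ) φ :=
  (h.hasDerivAt φ).snd

lemma hasDerivAt_height (h : IsTangentAngleParam T ρ Γ) (φ ψ : ℝ) :
    HasDerivAt (height Γ φ) (ρ ψ * sin (ψ - φ)) ψ := by
  refine (((h.hasDerivAt_snd ψ).const_mul (cos φ)).sub
    ((h.hasDerivAt_fst ψ).mul_const (sin φ))).congr_deriv ?_
  rw [sin_sub]
  ring

lemma hasDerivAt_along (h : IsTangentAngleParam T ρ Γ) (φ ψ : ℝ) :
    HasDerivAt (along Γ φ) (ρ ψ * cos (ψ - φ)) ψ := by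
  refine (((h.hasDerivAt_fst ψ).const_mul (cos φ)).add
    ((h.hasDerivAt_snd ψ).const_mul (sin φ))).congr_deriv ?_
  rw [cos_sub]
  ring

lemma continuous_along (h : IsTangentAngleParam T ρ Γ) :
    Continuous fun x : ℝ × ℝ => along Γ x.1 x.2 := by
  have := h.continuous
  simp only [along]
  fun_prop

lemma continuous_height_right (h : IsTangentAngleParam T ρ Γ) (φ : ℝ) : Continuous (height Γ φ) :=
  continuous_iff_continuousAt.2 fun ψ => (h.hasDerivAt_height φ ψ).continuousAt

lemma continuous_along_right (h : IsTangentAngleParam T ρ Γ) (φ : ℝ) : Continuous (along Γ φ) :=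
  continuous_iff_continuousAt.2 fun ψ => (h.hasDerivAt_along φ ψ).continuousAt

lemma height_periodic (h : IsTangentAngleParam T ρ Γ) (φ : ℝ) :
    Function.Periodic (height Γ φ) T :=
  fun ψ => congrArg (om (dir φ)) (h.periodic ψ)

lemma along_periodic (h : IsTangentAngleParam T ρ Γ) (φ : ℝ) :
    Function.Periodic (along Γ φ) T :=
  fun ψ => by simp only [along, h.periodic ψ]

lemma hasDerivAt_height_add (h : IsTangentAngleParam T ρ Γ) (φ v : ℝ) :
    HasDerivAt (fun v => height Γ φ (φ + v)) (ρ (φ + v) * sin v) v := by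
  simpa using (h.hasDerivAt_height φ (φ + v)).comp_const_add φ v

lemma hasDerivAt_height_sub (h : IsTangentAngleParam T ρ Γ) (φ u : ℝ) :
    HasDerivAt (fun u => height Γ φ (φ - u)) (ρ (φ - u) * sin u) u := by
  simpa using (h.hasDerivAt_height φ (φ - u)).comp_const_sub φ u

lemma hasDerivAt_along_add (h : IsTangentAngleParam T ρ Γ) (φ v : ℝ) :
    HasDerivAt (fun v => along Γ φ (φ + v)) (ρ (φ + v) * cos v) v := by
  simpa using (h.hasDerivAt_along φ (φ + v)).comp_const_add φ v

lemma hasDerivAt_along_sub (h : IsTangentAngleParam T ρ Γ) (φ u : ℝ) :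
    HasDerivAt (fun u => along Γ φ (φ - u)) (-(ρ (φ - u) * cos u)) u := by
  simpa using (h.hasDerivAt_along φ (φ - u)).comp_const_sub φ u

lemma strictMonoOn_height_add (h : IsTangentAngleParam T ρ Γ) (φ : ℝ) :
    StrictMonoOn (fun v => height Γ φ (φ + v)) (Icc 0 π) := by
  refine strictMonoOn_of_hasDerivWithinAt_pos (convex_Icc 0 π)
    (HasDerivAt.continuousOn fun v _ => h.hasDerivAt_height_add φ v)
    (fun v _ => (h.hasDerivAt_height_add φ v).hasDerivWithinAt) fun v hv => ?_
  rw [interior_Icc] at hv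
  exact mul_pos (h.pos _) (sin_pos_of_mem_Ioo hv)

lemma strictMonoOn_height_sub (h : IsTangentAngleParam T ρ Γ) (φ : ℝ) :
    StrictMonoOn (fun u => height Γ φ (φ - u)) (Icc 0 π) := by
  refine strictMonoOn_of_hasDerivWithinAt_pos (convex_Icc 0 π)
    (HasDerivAt.continuousOn fun u _ => h.hasDerivAt_height_sub φ u)
    (fun u _ => (h.hasDerivAt_height_sub φ u).hasDerivWithinAt) fun u hu => ?_
  rw [interior_Icc] at hu
  exact mul_pos (h.pos _) (sin_pos_of_mem_Ioo hu)

lemma height_sub_mem_image_height_add (h : IsTangentAngleParam T ρ Γ) {φ : ℝ}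
    (hφ : height Γ φ (φ + 2 * π) = height Γ φ φ) {u : ℝ} (hu : u ∈ Icc 0 π) :
    height Γ φ (φ + 2 * π - u) ∈ (fun v => height Γ φ (φ + v)) '' Icc 0 π := by
  have hmono : MonotoneOn (fun u => height Γ φ (φ + 2 * π - u)) (Icc 0 π) := by
    simpa only [height_add_two_pi_left] using (h.strictMonoOn_height_sub (φ + 2 * π)).monotoneOn
  refine intermediate_value_Icc pi_pos.le
    (HasDerivAt.continuousOn fun v _ => h.hasDerivAt_height_add φ v) ⟨?_, ?_⟩
  · simpa [hφ] using hmono (left_mem_Icc.2 pi_pos.le) hu hu.1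
  · rw [show φ + π = φ + 2 * π - π by ring]
    exact hmono hu (right_mem_Icc.2 pi_pos.le) hu.2

lemma hasDerivAt_height_self_add (h : IsTangentAngleParam T ρ Γ) (c φ : ℝ) :
    HasDerivAt (fun φ => height Γ φ (φ + c)) (ρ (φ + c) * sin c - along Γ φ (φ + c)) φ := by
  refine (((hasDerivAt_cos φ).mul ((h.hasDerivAt_snd (φ + c)).comp_add_const φ c)).sub
    (((h.hasDerivAt_fst (φ + c)).comp_add_const φ c).mul (hasDerivAt_sin φ))).congr_deriv ?_
  simp only [along, sin_add, cos_add]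
  linear_combination ρ (φ + c) * sin c * sin_sq_add_cos_sq φ

end IsTangentAngleParam

lemma exists_eq_zero_deriv_nonpos_of_sum_translates_eq_zero {d d' : ℝ → ℝ}
    (hd : ∀ x, HasDerivAt d (d' x) x) {τ : ℝ} (hτ : 0 < τ) {n : ℕ} (hn : 0 < n)
    (hsum : ∀ x, ∑ k ∈ Finset.range n, d (x + k * τ) = 0) : ∃ x, d x = 0 ∧ d' x ≤ 0 := by
  have hdc : Continuous d := continuous_iff_continuousAt.2 fun x => (hd x).continuousAt
  by_cases hneg : ∃ b, d b < 0
  · obtain ⟨b, hb⟩ := hneg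
    obtain ⟨a, hab, ha⟩ : ∃ a ≤ b, 0 ≤ d a := by
      obtain ⟨k, hk, hdk⟩ := Finset.exists_le_of_sum_le (f := fun _ => (0 : ℝ))
        (Finset.nonempty_range_iff.2 hn.ne') (by simpa using (hsum (b - n * τ)).ge)
      have hkn : (k : ℝ) ≤ n := by exact_mod_cast (Finset.mem_range.1 hk).le
      exact ⟨_, by nlinarith, hdk⟩
    obtain ⟨c, ⟨⟨hac, hcb⟩, hc0⟩, hcmax⟩ :=
      (isCompact_Icc.inter_right (isClosed_le continuous_const hdc)).exists_isGreatest
        ⟨a, ⟨left_mem_Icc.2 hab, ha⟩⟩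
    have hcb' : c < b := hcb.lt_of_ne fun hcb => (hcb ▸ hb).not_ge hc0
    have hright : ∀ᶠ x in 𝓝[>] c, d x ≤ 0 := by
      filter_upwards [Ioo_mem_nhdsGT hcb'] with x hx
      by_contra! hx0
      exact hx.1.not_ge (hcmax ⟨⟨hac.trans hx.1.le, hx.2.le⟩, hx0.le⟩)
    have hdc0 : d c = 0 :=
      le_antisymm (le_of_tendsto (hdc.continuousWithinAt (s := Ioi c)).tendsto hright) hc0
    refine ⟨c, hdc0, le_of_tendsto ((hasDerivWithinAt_iff_tendsto_slope' self_notMem_Ioi).1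
      (hd c).hasDerivWithinAt) ?_⟩
    filter_upwards [hright, self_mem_nhdsWithin (s := Ioi c)] with x hx hcx
    rw [slope_def_field, hdc0, sub_zero]
    exact div_nonpos_of_nonpos_of_nonneg hx (sub_nonneg.2 hcx.le)
  · push Not at hneg
    have hzero : d = 0 := funext fun x => by
      simpa using (Finset.sum_eq_zero_iff_of_nonneg fun k _ => hneg _).1 (hsum x) 0
        (Finset.mem_range.2 hn)
    refine ⟨0, congrFun hzero 0, ((hd 0).unique ?_).le⟩
    rw [hzero]
    exact hasDerivAt_const 0 0

namespace IsTangentAngleParam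

variable {T : ℝ} {ρ : ℝ → ℝ} {Γ : ℝ → ℝ × ℝ}

lemma strictAntiOn_along (h : IsTangentAngleParam T ρ Γ) (φ : ℝ) :
    StrictAntiOn (fun v => along Γ φ (φ + v)) (Icc (π / 2) (π + π / 2)) := by
  refine strictAntiOn_of_hasDerivWithinAt_neg (convex_Icc _ _)
    (HasDerivAt.continuousOn fun v _ => h.hasDerivAt_along_add φ v)
    (fun v _ => (h.hasDerivAt_along_add φ v).hasDerivWithinAt) fun v hv => ?_
  rw [interior_Icc] at hv
  exact mul_neg_of_pos_of_neg (h.pos _) (cos_neg_of_pi_div_two_lt_of_lt hv.1 hv.2)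

lemma exists_height_eq_along_le (h : IsTangentAngleParam T ρ Γ) {n : ℕ} (hn : 0 < n)
    (hT : T = n * (2 * π)) :
    ∃ φ, height Γ φ (φ + 2 * π) = height Γ φ φ ∧ along Γ φ φ ≤ along Γ φ (φ + 2 * π) := by
  obtain ⟨φ, heq, hle⟩ := exists_eq_zero_deriv_nonpos_of_sum_translates_eq_zero
    (fun φ => (h.hasDerivAt_height_self_add (2 * π) φ).sub (h.hasDerivAt_height_self_add 0 φ))
    two_pi_pos hn fun φ => by
      have hshift : ∀ k : ℕ, height Γ (φ + k * (2 * π)) = height Γ φ := fun k => by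
        funext ψ
        simp [height_eq, cos_add_nat_mul_two_pi, sin_add_nat_mul_two_pi]
      have htele := Finset.sum_range_sub (fun k : ℕ => height Γ φ (φ + k * (2 * π))) n
      rw [← hT, h.height_periodic φ φ] at htele
      simpa [hshift, add_mul, add_assoc] using htele
  refine ⟨φ, by simpa [sub_eq_zero] using heq, by simpa using hle⟩

lemma exists_continuous_height_matching (h : IsTangentAngleParam T ρ Γ) {φ : ℝ}
    (hφ : height Γ φ (φ + 2 * π) = height Γ φ φ) :
    ∃ w : ℝ → ℝ, Continuous w ∧ w 0 = 0 ∧ w π = π ∧ (∀ u, w u ∈ Icc 0 π) ∧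
      ∀ u ∈ Icc 0 π, height Γ φ (φ + w u) = height Γ φ (φ + 2 * π - u) := by
  have hmem := fun u : ℝ => h.height_sub_mem_image_height_add hφ (projIcc 0 π pi_pos.le u).2
  have hinj := (h.strictMonoOn_height_add φ).injOn
  have hheight := h.continuous_height_right φ
  have := continuous_projIcc (h := pi_pos.le)
  set w : ℝ → ℝ := fun u => Function.invFunOn (fun v => height Γ φ (φ + v)) (Icc 0 π)
    (height Γ φ (φ + 2 * π - projIcc 0 π pi_pos.le u))
  have hwmem : ∀ u, w u ∈ Icc 0 π := fun u => Function.invFunOn_mem (hmem u)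
  have hwheight : ∀ u ∈ Icc 0 π, height Γ φ (φ + w u) = height Γ φ (φ + 2 * π - u) :=
    fun u hu => (Function.invFunOn_eq (hmem u)).trans (by rw [projIcc_of_mem _ hu])
  refine ⟨w, continuous_invFunOn_of_isCompact isCompact_Icc
    (by fun_prop) (by fun_prop) (fun _ => hinj) hmem, ?_, ?_, hwmem, hwheight⟩
  · exact hinj (hwmem 0) (left_mem_Icc.2 pi_pos.le)
      (by simp [hwheight 0 (left_mem_Icc.2 pi_pos.le), hφ])
  · exact hinj (hwmem π) (right_mem_Icc.2 pi_pos.le)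
      (by simp [hwheight π (right_mem_Icc.2 pi_pos.le), show φ + 2 * π - π = φ + π by ring])

-- Starting at equal heights, the end of the arc lies ahead of its beginning, while near the common
-- point `φ + π` it lies behind: the two halves of the arc cross in between.
lemma exists_self_intersection (h : IsTangentAngleParam T ρ Γ) {φ : ℝ}
    (hheight : height Γ φ (φ + 2 * π) = height Γ φ φ)
    (halong : along Γ φ φ ≤ along Γ φ (φ + 2 * π)) :
    ∃ a b, a < b ∧ b ≤ a + 2 * π ∧ Γ a = Γ b := by
  obtain ⟨w, hw, hw0, hwπ, hwmem, hwheight⟩ := h.exists_continuous_height_matching hheight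
  obtain ⟨u₁, hwu₁, hu₁, hu₁π⟩ : ∃ u₁, π / 2 < w u₁ ∧ π / 2 < u₁ ∧ u₁ < π :=
    ((hw.continuousWithinAt.eventually (lt_mem_nhds (by rw [hwπ]; exact half_lt_self pi_pos))).and
      (Ioo_mem_nhdsLT (half_lt_self pi_pos))).exists
  have hbehind : along Γ φ (φ + 2 * π - u₁) ≤ along Γ φ (φ + w u₁) := by
    rw [add_sub_assoc]
    exact (h.strictAntiOn_along φ).antitoneOn (a := w u₁) (b := 2 * π - u₁)
      ⟨hwu₁.le, by linarith [(hwmem u₁).2, pi_pos]⟩ ⟨by linarith, by linarith⟩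
      (by linarith [(hwmem u₁).2])
  have hcont := h.continuous_along_right φ
  obtain ⟨u, hu, hzero⟩ := intermediate_value_Icc' (by linarith [pi_pos] : 0 ≤ u₁)
    (f := fun u => along Γ φ (φ + 2 * π - u) - along Γ φ (φ + w u)) (by fun_prop)
    ⟨sub_nonpos.2 hbehind, by simpa [hw0] using halong⟩
  exact ⟨φ + w u, φ + 2 * π - u, by linarith [(hwmem u).2, hu.2], by linarith [(hwmem u).1, hu.1],
    eq_of_height_eq_of_along_eq (hwheight u ⟨hu.1, hu.2.trans hu₁π.le⟩)
      (sub_eq_zero.1 hzero).symm⟩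

lemma turning_number_eq_one (h : IsTangentAngleParam T ρ Γ) {n : ℕ} (hn : 0 < n)
    (hT : T = n * (2 * π)) (hinj : ∀ a, InjOn Γ (Ico a (a + T))) : n = 1 := by
  obtain ⟨φ, hheight, halong⟩ := h.exists_height_eq_along_le hn hT
  obtain ⟨a, b, hab, hb, heq⟩ := h.exists_self_intersection hheight halong
  by_contra hn1
  have hn2 : (2 : ℝ) ≤ n := by exact_mod_cast (by omega : 2 ≤ n)
  have hbT : b < a + T := by nlinarith [pi_pos]
  exact hab.ne (hinj a ⟨le_rfl, hab.trans hbT⟩ ⟨hab.le, hbT⟩ heq)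

end IsTangentAngleParam

/-- The billiard sends the chord from `Γ (φ - u)` to `Γ φ` to the chord from `Γ φ` to
`Γ (φ + bounce Γ φ u)`, which is determined by the reflection law
`height Γ φ (φ + v) = height Γ φ (φ - u)`. Clamping `u` to `[0, π]` makes `bounce` continuous on
the whole plane. -/
noncomputable def bounce (Γ : ℝ → ℝ × ℝ) (φ u : ℝ) : ℝ :=
  Function.invFunOn (fun v => height Γ φ (φ + v)) (Icc 0 π)
    (height Γ φ (φ - projIcc 0 π pi_pos.le u))

/-- The symplectic billiard map: `(φ, u)` encodes the chord from `Γ (φ - u)` to `Γ φ`. -/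
noncomputable def billiardMap (Γ : ℝ → ℝ × ℝ) (x : ℝ × ℝ) : ℝ × ℝ :=
  (x.1 + bounce Γ x.1 x.2, bounce Γ x.1 x.2)

/-- The phase space of the billiard map. -/
def phaseSpace : Set (ℝ × ℝ) := {x | x.2 ∈ Ioo 0 π}

/-- The integral of `G` over one period of the phase space against the invariant area form of the
billiard map. -/
noncomputable def phaseIntegral (ρ : ℝ → ℝ) (G : ℝ × ℝ → ℝ) : ℝ :=
  ∫ x in Ioc 0 (2 * π) ×ˢ Ioo 0 π, G x * (ρ x.1 * ρ (x.1 - x.2) * sin x.2)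

lemma integrableOn_phaseDomain {F : ℝ × ℝ → ℝ} (hF : Continuous F) :
    IntegrableOn F (Ioc 0 (2 * π) ×ˢ Ioo 0 π) :=
  (hF.continuousOn.integrableOn_compact (isCompact_Icc.prod isCompact_Icc)).mono_set
    (prod_mono Ioc_subset_Icc_self Ioo_subset_Icc_self)

lemma phaseIntegral_eq_intervalIntegral {ρ : ℝ → ℝ} {G : ℝ × ℝ → ℝ} (hρ : Continuous ρ)
    (hG : Continuous G) : phaseIntegral ρ G =
      ∫ φ in 0..2 * π, ∫ u in 0..π, G (φ, u) * (ρ φ * ρ (φ - u) * sin u) := by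
  simp only [phaseIntegral, intervalIntegral.integral_of_le two_pi_pos.le,
    intervalIntegral.integral_of_le pi_pos.le, integral_Ioc_eq_integral_Ioo (x := (0 : ℝ)) (y := π)]
  rw [Measure.volume_eq_prod, setIntegral_prod]
  exact integrableOn_phaseDomain (by fun_prop)

namespace IsTangentAngleParam

variable {ρ : ℝ → ℝ} {Γ : ℝ → ℝ × ℝ}

lemma radius_periodic (h : IsTangentAngleParam (2 * π) ρ Γ) : Function.Periodic ρ (2 * π) := by
  intro φ
  have hderiv : ρ (φ + 2 * π) • dir φ = ρ φ • dir φ := by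
    have := (h.hasDerivAt (φ + 2 * π)).comp_add_const φ (2 * π)
    rw [h.periodic.funext, show dir (φ + 2 * π) = dir φ by simp [dir]] at this
    exact this.unique (h.hasDerivAt φ)
  have hdir : dir φ ≠ 0 := fun h0 => by
    simp only [dir, Prod.mk_eq_zero] at h0
    simpa [h0.1, h0.2] using sin_sq_add_cos_sq φ
  exact smul_left_injective ℝ hdir hderiv

lemma height_add_pi (h : IsTangentAngleParam (2 * π) ρ Γ) (φ : ℝ) :
    height Γ φ (φ + π) = height Γ φ (φ - π) := by
  rw [← h.height_periodic φ (φ - π)]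
  ring_nf

lemma height_sub_mem_image (h : IsTangentAngleParam (2 * π) ρ Γ) (φ u : ℝ) :
    height Γ φ (φ - projIcc 0 π pi_pos.le u) ∈ (fun v => height Γ φ (φ + v)) '' Icc 0 π := by
  rw [← h.height_periodic, sub_add_eq_add_sub]
  exact h.height_sub_mem_image_height_add (h.height_periodic φ φ) (projIcc 0 π pi_pos.le u).2

lemma bounce_mem_Icc (h : IsTangentAngleParam (2 * π) ρ Γ) (φ u : ℝ) : bounce Γ φ u ∈ Icc 0 π :=
  Function.invFunOn_mem (h.height_sub_mem_image φ u)

lemma height_add_bounce (h : IsTangentAngleParam (2 * π) ρ Γ) (φ : ℝ) {u : ℝ} (hu : u ∈ Icc 0 π) :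
    height Γ φ (φ + bounce Γ φ u) = height Γ φ (φ - u) :=
  (Function.invFunOn_eq (h.height_sub_mem_image φ u)).trans (by rw [projIcc_of_mem _ hu])

lemma bounce_eq_of_height_eq (h : IsTangentAngleParam (2 * π) ρ Γ) {φ u v : ℝ} (hu : u ∈ Icc 0 π)
    (hv : v ∈ Icc 0 π) (huv : height Γ φ (φ + v) = height Γ φ (φ - u)) : bounce Γ φ u = v :=
  (h.strictMonoOn_height_add φ).injOn (h.bounce_mem_Icc φ u) hv
    ((h.height_add_bounce φ hu).trans huv.symm)

lemma bounce_zero (h : IsTangentAngleParam (2 * π) ρ Γ) (φ : ℝ) : bounce Γ φ 0 = 0 :=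
  h.bounce_eq_of_height_eq (left_mem_Icc.2 pi_pos.le) (left_mem_Icc.2 pi_pos.le) (by simp)

lemma bounce_pi (h : IsTangentAngleParam (2 * π) ρ Γ) (φ : ℝ) : bounce Γ φ π = π :=
  h.bounce_eq_of_height_eq (right_mem_Icc.2 pi_pos.le) (right_mem_Icc.2 pi_pos.le)
    (h.height_add_pi φ)

lemma bounce_injOn (h : IsTangentAngleParam (2 * π) ρ Γ) (φ : ℝ) :
    InjOn (bounce Γ φ) (Icc 0 π) := fun u hu u' hu' huu' =>
  (h.strictMonoOn_height_sub φ).injOn hu hu' <| by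
    simp only [← h.height_add_bounce φ hu, ← h.height_add_bounce φ hu', huu']

lemma bounce_mem_Ioo (h : IsTangentAngleParam (2 * π) ρ Γ) (φ : ℝ) {u : ℝ} (hu : u ∈ Ioo 0 π) :
    bounce Γ φ u ∈ Ioo 0 π := by
  have hu' := Ioo_subset_Icc_self hu
  refine ⟨(h.bounce_mem_Icc φ u).1.lt_of_ne fun h0 => hu.1.ne ?_,
    (h.bounce_mem_Icc φ u).2.lt_of_ne fun hπ => hu.2.ne ?_⟩
  · exact h.bounce_injOn φ (left_mem_Icc.2 pi_pos.le) hu' ((h.bounce_zero φ).trans h0)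
  · exact h.bounce_injOn φ hu' (right_mem_Icc.2 pi_pos.le) (hπ.trans (h.bounce_pi φ).symm)

lemma continuous_bounce (h : IsTangentAngleParam (2 * π) ρ Γ) :
    Continuous fun x : ℝ × ℝ => bounce Γ x.1 x.2 := by
  have hΓ := h.continuous
  have := continuous_projIcc (h := pi_pos.le)
  exact continuous_invFunOn_of_isCompact
    (f := fun (x : ℝ × ℝ) v => height Γ x.1 (x.1 + v))
    (g := fun x => height Γ x.1 (x.1 - projIcc 0 π pi_pos.le x.2)) isCompact_Icc
    (by simp only [height_eq, Function.uncurry_def]; fun_prop) (by simp only [height_eq]; fun_prop)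
    (fun x => (h.strictMonoOn_height_add x.1).injOn) (fun x => h.height_sub_mem_image x.1 x.2)

lemma continuous_bounce_right (h : IsTangentAngleParam (2 * π) ρ Γ) (φ : ℝ) :
    Continuous (bounce Γ φ) := by
  have := h.continuous_bounce.comp (Continuous.prodMk_right φ)
  exact this

lemma bounce_add_two_pi (h : IsTangentAngleParam (2 * π) ρ Γ) (φ : ℝ) :
    bounce Γ (φ + 2 * π) = bounce Γ φ := by
  funext u
  simp only [bounce, height_add_two_pi_left, add_right_comm φ (2 * π), add_sub_right_comm φ (2 * π),
    h.height_periodic φ _]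

lemma exists_bounce_eq (h : IsTangentAngleParam (2 * π) ρ Γ) (φ : ℝ) {v : ℝ} (hv : v ∈ Ioo 0 π) :
    ∃ u ∈ Ioo 0 π, bounce Γ φ u = v :=
  intermediate_value_Ioo (f := bounce Γ φ) pi_pos.le (h.continuous_bounce_right φ).continuousOn
    (by rwa [h.bounce_zero, h.bounce_pi])

-- Both sides are the integral of one function of the common height.
lemma integral_comp_bounce (h : IsTangentAngleParam (2 * π) ρ Γ) (φ : ℝ) (F : ℝ → ℝ) :
    ∫ u in 0..π, F (bounce Γ φ u) * (ρ (φ - u) * sin u) =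
      ∫ v in 0..π, F v * (ρ (φ + v) * sin v) := by
  set W := Function.invFunOn (fun v => height Γ φ (φ + v)) (Icc 0 π)
  have hsin : ∀ u ∈ Ioo (min 0 π) (max 0 π), 0 ≤ sin u := fun u hu => by
    rw [min_eq_left pi_pos.le, max_eq_right pi_pos.le] at hu
    exact (sin_pos_of_mem_Ioo hu).le
  calc ∫ u in 0..π, F (bounce Γ φ u) * (ρ (φ - u) * sin u)
      = ∫ u in 0..π, ((F ∘ W) ∘ fun u => height Γ φ (φ - u)) u * (ρ (φ - u) * sin u) := by
        refine intervalIntegral.integral_congr fun u hu => ?_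
        rw [uIcc_of_le pi_pos.le] at hu
        simp only [bounce, Function.comp_apply, projIcc_of_mem _ hu, W]
    _ = ∫ s in height Γ φ (φ - 0)..height Γ φ (φ - π), (F ∘ W) s :=
        intervalIntegral.integral_comp_mul_deriv_of_deriv_nonneg
          (HasDerivAt.continuousOn fun u _ => h.hasDerivAt_height_sub φ u)
          (fun u _ => h.hasDerivAt_height_sub φ u) fun u hu => mul_nonneg (h.pos _).le (hsin u hu)
    _ = ∫ s in height Γ φ (φ + 0)..height Γ φ (φ + π), (F ∘ W) s := by
        rw [h.height_add_pi, sub_zero, add_zero]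
    _ = ∫ v in 0..π, ((F ∘ W) ∘ fun v => height Γ φ (φ + v)) v * (ρ (φ + v) * sin v) :=
        (intervalIntegral.integral_comp_mul_deriv_of_deriv_nonneg
          (HasDerivAt.continuousOn fun v _ => h.hasDerivAt_height_add φ v)
          (fun v _ => h.hasDerivAt_height_add φ v)
          fun v hv => mul_nonneg (h.pos _).le (hsin v hv)).symm
    _ = ∫ v in 0..π, F v * (ρ (φ + v) * sin v) := by
        refine intervalIntegral.integral_congr fun v hv => ?_
        rw [uIcc_of_le pi_pos.le] at hv
        simp only [Function.comp_apply, W,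
          (h.strictMonoOn_height_add φ).injOn.leftInvOn_invFunOn hv]

lemma continuous_billiardMap (h : IsTangentAngleParam (2 * π) ρ Γ) :
    Continuous (billiardMap Γ) := by
  have := h.continuous_bounce
  unfold billiardMap
  fun_prop

lemma billiardMap_add_two_pi (h : IsTangentAngleParam (2 * π) ρ Γ) (x : ℝ × ℝ) :
    billiardMap Γ (x + (2 * π, 0)) = billiardMap Γ x + (2 * π, 0) := by
  simp only [billiardMap, Prod.fst_add, Prod.snd_add, add_zero, h.bounce_add_two_pi, Prod.mk_add_mk,
    add_right_comm]

lemma phaseIntegral_comp_billiardMap_eq (h : IsTangentAngleParam (2 * π) ρ Γ) {G : ℝ × ℝ → ℝ}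
    (hG : Continuous G) : phaseIntegral ρ (G ∘ billiardMap Γ) =
      ∫ φ in 0..2 * π, ∫ v in 0..π, G (φ + v, v) * (ρ φ * ρ (φ + v) * sin v) := by
  rw [phaseIntegral_eq_intervalIntegral h.continuous_radius (hG.comp h.continuous_billiardMap)]
  congr! 2 with φ
  convert h.integral_comp_bounce φ (fun v => G (φ + v, v) * ρ φ) using 3 with u v
  · simp only [Function.comp_apply, billiardMap]
    ring
  · ring

lemma phaseIntegral_comp_billiardMap (h : IsTangentAngleParam (2 * π) ρ Γ) {G : ℝ × ℝ → ℝ}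
    (hG : Continuous G) (hper : Function.Periodic G (2 * π, 0)) :
    phaseIntegral ρ (G ∘ billiardMap Γ) = phaseIntegral ρ G := by
  have hρ := h.continuous_radius
  have hper' : ∀ φ u, G (φ + 2 * π, u) = G (φ, u) := fun φ u => by simpa using hper (φ, u)
  rw [h.phaseIntegral_comp_billiardMap_eq hG, phaseIntegral_eq_intervalIntegral hρ hG,
    integral_swap_of_continuous (by fun_prop) 0 (2 * π) 0 π,
    integral_swap_of_continuous (f := fun φ v => G (φ, v) * _) (by fun_prop) 0 (2 * π) 0 π]
  congr! 2 with v
  have hF : Function.Periodic (fun φ => G (φ, v) * (ρ φ * ρ (φ - v) * sin v)) (2 * π) :=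
    fun φ => by simp only [hper', h.radius_periodic φ, add_sub_right_comm,
      h.radius_periodic (φ - v)]
  calc ∫ φ in 0..2 * π, G (φ + v, v) * (ρ φ * ρ (φ + v) * sin v)
      = ∫ φ in 0..2 * π, G (φ + v, v) * (ρ (φ + v) * ρ (φ + v - v) * sin v) := by
        congr! 2 with φ
        rw [add_sub_cancel_right]
        ring
    _ = ∫ φ in v..v + 2 * π, G (φ, v) * (ρ φ * ρ (φ - v) * sin v) := by
        rw [intervalIntegral.integral_comp_add_right
          (fun φ => G (φ, v) * (ρ φ * ρ (φ - v) * sin v)), zero_add, add_comm]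
    _ = ∫ φ in 0..2 * π, G (φ, v) * (ρ φ * ρ (φ - v) * sin v) := by
        rw [hF.intervalIntegral_add_eq v 0, zero_add]

lemma iterate_billiardMap_add_two_pi (h : IsTangentAngleParam (2 * π) ρ Γ) (k : ℕ) (x : ℝ × ℝ) :
    (billiardMap Γ)^[k] (x + (2 * π, 0)) = (billiardMap Γ)^[k] x + (2 * π, 0) :=
  (Function.Semiconj.iterate_right (f := (· + (2 * π, (0 : ℝ))))
    (fun y => (h.billiardMap_add_two_pi y).symm) k x).symm

lemma phaseIntegral_comp_iterate (h : IsTangentAngleParam (2 * π) ρ Γ) {G : ℝ × ℝ → ℝ}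
    (hG : Continuous G) (hper : Function.Periodic G (2 * π, 0)) (k : ℕ) :
    phaseIntegral ρ (G ∘ (billiardMap Γ)^[k]) = phaseIntegral ρ G := by
  induction k with
  | zero => rfl
  | succ k ih =>
    rw [← ih, Function.iterate_succ, ← Function.comp_assoc]
    refine h.phaseIntegral_comp_billiardMap (hG.comp (h.continuous_billiardMap.iterate k))
      fun x => ?_
    rw [Function.comp_apply, h.iterate_billiardMap_add_two_pi, hper, Function.comp_apply]

lemma phaseIntegral_add (h : IsTangentAngleParam (2 * π) ρ Γ) {G H : ℝ × ℝ → ℝ} (hG : Continuous G)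
    (hH : Continuous H) : phaseIntegral ρ (G + H) = phaseIntegral ρ G + phaseIntegral ρ H := by
  have hρ := h.continuous_radius
  simp only [phaseIntegral, Pi.add_apply, add_mul]
  exact integral_add (integrableOn_phaseDomain (by fun_prop))
    (integrableOn_phaseDomain (by fun_prop))

lemma phaseIntegral_mono (h : IsTangentAngleParam (2 * π) ρ Γ) {G H : ℝ × ℝ → ℝ}
    (hG : Continuous G) (hH : Continuous H) (hle : ∀ x ∈ phaseSpace, G x ≤ H x) :
    phaseIntegral ρ G ≤ phaseIntegral ρ H := by
  have hρ := h.continuous_radius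
  refine setIntegral_mono_on (integrableOn_phaseDomain (by fun_prop))
    (integrableOn_phaseDomain (by fun_prop)) (measurableSet_Ioc.prod measurableSet_Ioo)
    fun x hx => mul_le_mul_of_nonneg_right (hle x hx.2) ?_
  exact (mul_pos (mul_pos (h.pos _) (h.pos _)) (sin_pos_of_mem_Ioo hx.2)).le

lemma continuous_birkhoffSum (h : IsTangentAngleParam (2 * π) ρ Γ) {G : ℝ × ℝ → ℝ}
    (hG : Continuous G) (n : ℕ) : Continuous (birkhoffSum (billiardMap Γ) G n) :=
  continuous_finsetSum _ fun k _ => hG.comp (h.continuous_billiardMap.iterate k)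

lemma phaseIntegral_birkhoffSum (h : IsTangentAngleParam (2 * π) ρ Γ) {G : ℝ × ℝ → ℝ}
    (hG : Continuous G) (hper : Function.Periodic G (2 * π, 0)) (n : ℕ) :
    phaseIntegral ρ (birkhoffSum (billiardMap Γ) G n) = n * phaseIntegral ρ G := by
  induction n with
  | zero => simp [phaseIntegral]
  | succ n ih =>
    have hsucc : birkhoffSum (billiardMap Γ) G (n + 1) =
        birkhoffSum (billiardMap Γ) G n + G ∘ (billiardMap Γ)^[n] := by
      funext x
      exact birkhoffSum_succ _ _ _ _
    rw [hsucc, h.phaseIntegral_add (h.continuous_birkhoffSum hG n)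
      (hG.comp (h.continuous_billiardMap.iterate n)), ih, h.phaseIntegral_comp_iterate hG hper]
    push_cast
    ring

end IsTangentAngleParam

lemma intervalIntegral_eq_add_of_periodic {f : ℝ → ℝ} (hf : Continuous f)
    (hper : Function.Periodic f (2 * π)) (φ : ℝ) :
    ∫ ψ in 0..2 * π, f ψ = (∫ v in 0..π, f (φ + v)) + ∫ u in 0..π, f (φ - u) := by
  rw [intervalIntegral.integral_comp_add_left, intervalIntegral.integral_comp_sub_left, add_comm,
    add_zero, sub_zero, intervalIntegral.integral_add_adjacent_intervals
      (hf.intervalIntegrable _ _) (hf.intervalIntegrable _ _)]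
  convert hper.intervalIntegral_add_eq 0 (φ - π) using 2 <;> ring

/-- The support function of a curve parametrized by its tangent angle. -/
noncomputable def support (Γ : ℝ → ℝ × ℝ) (ψ : ℝ) : ℝ := om (Γ ψ) (dir ψ)

/-- The diagonal coefficient of the Jacobi equation in the coordinates `(φ, u)`. -/
noncomputable def jacobiCoeff (ρ : ℝ → ℝ) (Γ : ℝ → ℝ × ℝ) (x : ℝ × ℝ) : ℝ :=
  (along Γ x.1 (x.1 + bounce Γ x.1 x.2) - along Γ x.1 (x.1 - x.2)) / ρ x.1

namespace IsTangentAngleParam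

variable {ρ : ℝ → ℝ} {Γ : ℝ → ℝ × ℝ}

lemma continuous_support (h : IsTangentAngleParam (2 * π) ρ Γ) : Continuous (support Γ) := by
  have := h.continuous
  unfold support om dir
  fun_prop

/-- Both sides are the area enclosed by `Γ`. -/
lemma integral_along_mul (h : IsTangentAngleParam (2 * π) ρ Γ) (φ : ℝ) :
    ∫ ψ in 0..2 * π, along Γ φ ψ * (ρ ψ * sin (ψ - φ)) =
      (∫ ψ in 0..2 * π, support Γ ψ * ρ ψ) / 2 := by
  have hρ := h.continuous_radius
  have halong := h.continuous_along_right φ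
  have := h.continuous_height_right φ
  have hsupport := h.continuous_support
  have hparts := intervalIntegral.integral_deriv_mul_eq_sub (a := 0) (b := 2 * π)
    (fun ψ _ => h.hasDerivAt_along φ ψ) (fun ψ _ => h.hasDerivAt_height φ ψ)
    (Continuous.intervalIntegrable (by fun_prop) _ _)
    (Continuous.intervalIntegrable (by fun_prop) _ _)
  rw [← zero_add (2 * π), h.along_periodic, h.height_periodic, sub_self, zero_add] at hparts
  rw [eq_div_iff two_ne_zero, mul_comm, ← intervalIntegral.integral_const_mul, ← sub_eq_zero,
    ← hparts, ← intervalIntegral.integral_sub (Continuous.intervalIntegrable (by fun_prop) _ _)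
      (Continuous.intervalIntegrable (by fun_prop) _ _)]
  congr! 2 with ψ
  have hsin : sin ψ = sin φ * cos (ψ - φ) + cos φ * sin (ψ - φ) := by rw [← sin_add]; ring_nf
  have hcos : cos ψ = cos φ * cos (ψ - φ) - sin φ * sin (ψ - φ) := by rw [← cos_add]; ring_nf
  simp only [support, om, dir, height_eq, along, hsin, hcos]
  ring

lemma integral_along_bounce_sub (h : IsTangentAngleParam (2 * π) ρ Γ) (φ : ℝ) :
    ∫ u in 0..π, (along Γ φ (φ + bounce Γ φ u) - along Γ φ (φ - u)) * (ρ (φ - u) * sin u) =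
      (∫ ψ in 0..2 * π, support Γ ψ * ρ ψ) / 2 := by
  have hρ := h.continuous_radius
  have halong := h.continuous_along_right φ
  have hbounce := h.continuous_bounce_right φ
  have hper : Function.Periodic (fun ψ => along Γ φ ψ * (ρ ψ * sin (ψ - φ))) (2 * π) :=
    (h.along_periodic φ).mul (h.radius_periodic.mul (sin_periodic.sub_const φ))
  rw [← h.integral_along_mul φ, intervalIntegral_eq_add_of_periodic (by fun_prop) hper φ]
  simp only [sub_mul, add_sub_cancel_left, sub_sub_cancel_left, sin_neg, mul_neg]
  rw [intervalIntegral.integral_sub (Continuous.intervalIntegrable (by fun_prop) _ _)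
    (Continuous.intervalIntegrable (by fun_prop) _ _), intervalIntegral.integral_neg,
    ← sub_eq_add_neg, h.integral_comp_bounce φ fun v => along Γ φ (φ + v)]

lemma continuous_jacobiCoeff (h : IsTangentAngleParam (2 * π) ρ Γ) :
    Continuous (jacobiCoeff ρ Γ) := by
  have hbounce := h.continuous_bounce
  have hΓ := h.continuous
  have hρ := h.continuous_radius
  unfold jacobiCoeff along
  fun_prop (disch := exact fun x => (h.pos _).ne')

lemma jacobiCoeff_periodic (h : IsTangentAngleParam (2 * π) ρ Γ) :
    Function.Periodic (jacobiCoeff ρ Γ) (2 * π, 0) := fun x => by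
  simp only [jacobiCoeff, Prod.fst_add, Prod.snd_add, add_zero, h.bounce_add_two_pi,
    along_add_two_pi_left, h.radius_periodic x.1, add_right_comm x.1 (2 * π),
    add_sub_right_comm x.1, h.along_periodic x.1 _]

lemma phaseIntegral_jacobiCoeff (h : IsTangentAngleParam (2 * π) ρ Γ) :
    phaseIntegral ρ (jacobiCoeff ρ Γ) = π * ∫ ψ in 0..2 * π, support Γ ψ * ρ ψ := by
  have hslice : ∀ φ, ∫ u in 0..π, jacobiCoeff ρ Γ (φ, u) * (ρ φ * ρ (φ - u) * sin u) =
      (∫ ψ in 0..2 * π, support Γ ψ * ρ ψ) / 2 := fun φ => by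
    rw [← h.integral_along_bounce_sub φ]
    congr! 2 with u
    have := (h.pos φ).ne'
    simp only [jacobiCoeff]
    field_simp
  rw [phaseIntegral_eq_intervalIntegral h.continuous_radius h.continuous_jacobiCoeff]
  simp only [hslice, intervalIntegral.integral_const, smul_eq_mul, sub_zero]
  ring

lemma integral_radius_mul_sin_sq (h : IsTangentAngleParam (2 * π) ρ Γ)
    (hcos : ∫ φ in 0..2 * π, ρ φ * cos (2 * φ) = 0)
    (hsin : ∫ φ in 0..2 * π, ρ φ * sin (2 * φ) = 0) (φ : ℝ) :
    ∫ ψ in 0..2 * π, ρ ψ * sin (ψ - φ) ^ 2 = (∫ ψ in 0..2 * π, ρ ψ) / 2 := by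
  have hρ := h.continuous_radius
  have hdouble : ∀ ψ, ρ ψ * sin (ψ - φ) ^ 2 = ρ ψ / 2
      - (ρ ψ * cos (2 * ψ) * (cos (2 * φ) / 2) + ρ ψ * sin (2 * ψ) * (sin (2 * φ) / 2)) :=
    fun ψ => by
      rw [sin_sq_eq_half_sub, mul_sub 2 ψ φ, cos_sub]
      ring
  simp_rw [hdouble]
  rw [intervalIntegral.integral_sub (Continuous.intervalIntegrable (by fun_prop) _ _)
    (Continuous.intervalIntegrable (by fun_prop) _ _),
    intervalIntegral.integral_add (Continuous.intervalIntegrable (by fun_prop) _ _)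
    (Continuous.intervalIntegrable (by fun_prop) _ _), intervalIntegral.integral_mul_const,
    intervalIntegral.integral_mul_const, intervalIntegral.integral_div, hcos, hsin]
  ring

lemma phaseIntegral_sin (h : IsTangentAngleParam (2 * π) ρ Γ)
    (hcos : ∫ φ in 0..2 * π, ρ φ * cos (2 * φ) = 0)
    (hsin : ∫ φ in 0..2 * π, ρ φ * sin (2 * φ) = 0) :
    phaseIntegral ρ (fun x => sin x.2) = (∫ φ in 0..2 * π, ρ φ) ^ 2 / 4 := by
  have hρ := h.continuous_radius
  have hG : Continuous fun x : ℝ × ℝ => sin x.2 := by fun_prop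
  have hslice : ∀ φ, (∫ v in 0..π, ρ (φ + v) * sin v ^ 2) + (∫ u in 0..π, ρ (φ - u) * sin u ^ 2) =
      (∫ ψ in 0..2 * π, ρ ψ) / 2 := fun φ => by
    have hper : Function.Periodic (fun ψ => ρ ψ * sin (ψ - φ) ^ 2) (2 * π) := fun ψ => by
      simp only [h.radius_periodic ψ, add_sub_right_comm, sin_add_two_pi]
    rw [← h.integral_radius_mul_sin_sq hcos hsin φ,
      intervalIntegral_eq_add_of_periodic (by fun_prop) hper φ]
    simp only [add_sub_cancel_left, sub_sub_cancel_left, sin_neg, neg_sq]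
  have hout := (h.phaseIntegral_comp_billiardMap_eq hG).symm.trans
    (h.phaseIntegral_comp_billiardMap hG fun x => by simp)
  have hin := phaseIntegral_eq_intervalIntegral hρ hG
  have hcont : ∀ g : ℝ → ℝ → ℝ, Continuous (Function.uncurry g) →
      IntervalIntegrable (fun φ => ∫ u in 0..π, g φ u) volume 0 (2 * π) := fun g hg =>
    Continuous.intervalIntegrable
      (intervalIntegral.continuous_parametric_intervalIntegral_of_continuous' hg 0 π) _ _
  have hsum : phaseIntegral ρ (fun x => sin x.2) + phaseIntegral ρ (fun x => sin x.2) =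
      ∫ φ in 0..2 * π, ρ φ * ((∫ ψ in 0..2 * π, ρ ψ) / 2) := by
    nth_rewrite 1 [← hout]
    rw [hin, ← intervalIntegral.integral_add (hcont _ (by fun_prop)) (hcont _ (by fun_prop))]
    congr! 2 with φ
    rw [← hslice φ, mul_add, ← intervalIntegral.integral_const_mul,
      ← intervalIntegral.integral_const_mul]
    congr! 3 <;> ring
  rw [intervalIntegral.integral_mul_const] at hsum
  linarith

/-- Integrating the inequality over the phase space and letting `N → ∞`. -/
lemma sq_integral_radius_le (h : IsTangentAngleParam (2 * π) ρ Γ)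
    (hcos : ∫ φ in 0..2 * π, ρ φ * cos (2 * φ) = 0)
    (hsin : ∫ φ in 0..2 * π, ρ φ * sin (2 * φ) = 0)
    (hle : ∀ x ∈ phaseSpace, ∀ N : ℕ,
      2 * birkhoffSum (billiardMap Γ) (fun x => sin x.2) N (billiardMap Γ x) ≤
        birkhoffSum (billiardMap Γ) (jacobiCoeff ρ Γ) (N + 1) x) :
    (∫ φ in 0..2 * π, ρ φ) ^ 2 / 2 ≤ π * ∫ ψ in 0..2 * π, support Γ ψ * ρ ψ := by
  set a := (∫ φ in 0..2 * π, ρ φ) ^ 2 / 2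
  rw [← h.phaseIntegral_jacobiCoeff]
  set b := phaseIntegral ρ (jacobiCoeff ρ Γ)
  have hG : Continuous fun x : ℝ × ℝ => 2 * sin x.2 := by fun_prop
  have hper : Function.Periodic (fun x : ℝ × ℝ => 2 * sin x.2) (2 * π, 0) := fun x => by simp
  have hsin_total : phaseIntegral ρ (fun x => 2 * sin x.2) = a := by
    have hsum : (fun x : ℝ × ℝ => 2 * sin x.2) = (fun x => sin x.2) + fun x => sin x.2 :=
      funext fun x => two_mul _
    rw [hsum, h.phaseIntegral_add (by fun_prop) (by fun_prop), h.phaseIntegral_sin hcos hsin]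
    ring
  have hN : ∀ N : ℕ, N * a ≤ (N + 1) * b := fun N => by
    have hcomp := h.phaseIntegral_comp_billiardMap (h.continuous_birkhoffSum hG N)
      fun x => by simp [birkhoffSum, h.iterate_billiardMap_add_two_pi]
    rw [h.phaseIntegral_birkhoffSum hG hper, hsin_total] at hcomp
    rw [← hcomp, ← Nat.cast_add_one,
      ← h.phaseIntegral_birkhoffSum h.continuous_jacobiCoeff h.jacobiCoeff_periodic]
    refine h.phaseIntegral_mono ((h.continuous_birkhoffSum hG N).comp h.continuous_billiardMap)
      (h.continuous_birkhoffSum h.continuous_jacobiCoeff _) fun x hx => ?_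
    simpa only [birkhoffSum, Finset.mul_sum, Function.comp_apply] using hle x hx N
  by_contra! hlt
  obtain ⟨N, hN'⟩ := exists_nat_gt (b / (a - b))
  rw [div_lt_iff₀ (sub_pos.2 hlt)] at hN'
  linarith [hN N]

end IsTangentAngleParam

lemma exists_int_orbit {α : Type*} {f : α → α} {s : Set α} (hmaps : MapsTo f s s)
    (hsurj : SurjOn f s s) {a : α} (ha : a ∈ s) :
    ∃ z : ℤ → α, (∀ n, z n ∈ s) ∧ (∀ k : ℕ, z k = f^[k] a) ∧ ∀ n, z (n + 1) = f (z n) := by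
  have : Nonempty α := ⟨a⟩
  set g := Function.invFunOn f s
  have hg : ∀ k, g^[k] a ∈ s := fun k => hsurj.mapsTo_invFunOn.iterate k ha
  have hfg : ∀ k, f (g^[k + 1] a) = g^[k] a := fun k => by
    rw [Function.iterate_succ_apply', hsurj.rightInvOn_invFunOn (hg k)]
  refine ⟨fun | .ofNat k => f^[k] a | .negSucc k => g^[k + 1] a, ?_, fun k => rfl, ?_⟩
  · rintro (k | k)
    exacts [hmaps.iterate k ha, hg (k + 1)]
  · rintro (k | _ | k)
    exacts [Function.iterate_succ_apply' f k a, (hfg 0).symm, (hfg (k + 1)).symm]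

/-- `NoConjugatePoints` in the tangent angle parametrization, where the Jacobi fields are rescaled
by the speed of the original parametrization. -/
def NoConjugatePointsAngle (ρ : ℝ → ℝ) (Γ : ℝ → ℝ × ℝ) : Prop :=
  ∀ φ : ℤ → ℝ, (∀ n, 0 < sin (φ (n + 1) - φ n)) →
    (∀ n, height Γ (φ n) (φ (n + 1)) = height Γ (φ n) (φ (n - 1))) →
    ∀ ζ : ℤ → ℝ,
      (∀ n, sin (φ n - φ (n - 1)) * ζ (n - 1)
        - (along Γ (φ n) (φ (n + 1)) - along Γ (φ n) (φ (n - 1))) / ρ (φ n) * ζ n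
        + sin (φ (n + 1) - φ n) * ζ (n + 1) = 0) →
      ζ ≠ 0 → ¬∃ M N : ℤ, M < N ∧ ζ M = 0 ∧ ζ N = 0

/-- The lift of the billiard map to pairs of consecutive values of a Jacobi field. -/
noncomputable def jacobiStep (ρ : ℝ → ℝ) (Γ : ℝ → ℝ × ℝ) (y : (ℝ × ℝ) × (ℝ × ℝ)) :
    (ℝ × ℝ) × (ℝ × ℝ) :=
  (billiardMap Γ y.1, y.2.2,
    (jacobiCoeff ρ Γ y.1 * y.2.2 - sin y.1.2 * y.2.1) / sin (billiardMap Γ y.1).2)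

/-- The Jacobi field along the orbit of `x` with initial values `0, 1`. -/
noncomputable def jacobiField (ρ : ℝ → ℝ) (Γ : ℝ → ℝ × ℝ) (k : ℕ) (x : ℝ × ℝ) : ℝ :=
  ((jacobiStep ρ Γ)^[k] (x, 0, 1)).2.1

lemma iterate_jacobiStep (ρ : ℝ → ℝ) (Γ : ℝ → ℝ × ℝ) (k : ℕ) (x : ℝ × ℝ) :
    (jacobiStep ρ Γ)^[k] (x, 0, 1) =
      ((billiardMap Γ)^[k] x, jacobiField ρ Γ k x, jacobiField ρ Γ (k + 1) x) := by
  have hfst : Function.Semiconj Prod.fst (jacobiStep ρ Γ) (billiardMap Γ) := fun _ => rfl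
  refine Prod.ext (hfst.iterate_right k (x, 0, 1)) (Prod.ext rfl ?_)
  simp only [jacobiField, Function.iterate_succ_apply', jacobiStep]

lemma jacobiField_add_two (ρ : ℝ → ℝ) (Γ : ℝ → ℝ × ℝ) (k : ℕ) (x : ℝ × ℝ) :
    jacobiField ρ Γ (k + 2) x =
      (jacobiCoeff ρ Γ ((billiardMap Γ)^[k] x) * jacobiField ρ Γ (k + 1) x
        - sin ((billiardMap Γ)^[k] x).2 * jacobiField ρ Γ k x) /
        sin ((billiardMap Γ)^[k + 1] x).2 := by
  have hstep := congrArg (fun y => y.2.2) (iterate_jacobiStep ρ Γ (k + 1) x)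
  rw [Function.iterate_succ_apply', iterate_jacobiStep] at hstep
  rw [Function.iterate_succ_apply']
  exact hstep.symm

namespace IsTangentAngleParam

variable {ρ : ℝ → ℝ} {Γ : ℝ → ℝ × ℝ}

lemma mapsTo_billiardMap (h : IsTangentAngleParam (2 * π) ρ Γ) :
    MapsTo (billiardMap Γ) phaseSpace phaseSpace := fun x hx => h.bounce_mem_Ioo x.1 hx

lemma surjOn_billiardMap (h : IsTangentAngleParam (2 * π) ρ Γ) :
    SurjOn (billiardMap Γ) phaseSpace phaseSpace := fun y hy => by
  obtain ⟨u, hu, huy⟩ := h.exists_bounce_eq (y.1 - y.2) hy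
  exact ⟨(y.1 - y.2, u), hu, by simp [billiardMap, huy]⟩

lemma sin_iterate_pos (h : IsTangentAngleParam (2 * π) ρ Γ) {x : ℝ × ℝ} (hx : x ∈ phaseSpace)
    (k : ℕ) : 0 < sin ((billiardMap Γ)^[k] x).2 :=
  sin_pos_of_mem_Ioo (h.mapsTo_billiardMap.iterate k hx)

lemma mapsTo_jacobiStep (h : IsTangentAngleParam (2 * π) ρ Γ) :
    MapsTo (jacobiStep ρ Γ) (phaseSpace ×ˢ univ) (phaseSpace ×ˢ univ) :=
  fun _ hy => ⟨h.mapsTo_billiardMap hy.1, mem_univ _⟩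

lemma surjOn_jacobiStep (h : IsTangentAngleParam (2 * π) ρ Γ) :
    SurjOn (jacobiStep ρ Γ) (phaseSpace ×ˢ univ) (phaseSpace ×ˢ univ) := by
  rintro ⟨y, b, c⟩ ⟨hy, -⟩
  obtain ⟨x, hx, rfl⟩ := h.surjOn_billiardMap hy
  have hsinx : sin x.2 ≠ 0 := (sin_pos_of_mem_Ioo hx).ne'
  have hsiny : sin (billiardMap Γ x).2 ≠ 0 := (sin_pos_of_mem_Ioo hy).ne'
  refine ⟨(x, (jacobiCoeff ρ Γ x * b - sin (billiardMap Γ x).2 * c) / sin x.2, b),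
    ⟨hx, mem_univ _⟩, ?_⟩
  simp only [jacobiStep]
  congr 2
  field_simp
  ring

lemma continuousOn_jacobiField (h : IsTangentAngleParam (2 * π) ρ Γ) (k : ℕ) :
    ContinuousOn (jacobiField ρ Γ k) phaseSpace := by
  have hmap := h.continuous_billiardMap
  have hcoeff := h.continuous_jacobiCoeff
  have hstep : ContinuousOn (jacobiStep ρ Γ) (phaseSpace ×ˢ univ) := by
    have hsin : Continuous fun y : (ℝ × ℝ) × (ℝ × ℝ) => sin (billiardMap Γ y.1).2 :=
      continuous_sin.comp (continuous_snd.comp (hmap.comp continuous_fst))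
    refine (hmap.comp continuous_fst).continuousOn.prodMk (continuousOn_snd.snd.prodMk ?_)
    exact ContinuousOn.div (by fun_prop) hsin.continuousOn fun y hy =>
      (sin_pos_of_mem_Ioo (h.mapsTo_billiardMap hy.1)).ne'
  exact continuous_fst.comp_continuousOn <| continuous_snd.comp_continuousOn <|
    (hstep.iterate h.mapsTo_jacobiStep k).comp (by fun_prop : Continuous _).continuousOn
      fun x hx => ⟨hx, mem_univ _⟩

lemma jacobiField_ne_zero (h : IsTangentAngleParam (2 * π) ρ Γ)
    (hnc : NoConjugatePointsAngle ρ Γ) {x : ℝ × ℝ} (hx : x ∈ phaseSpace) (k : ℕ) :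
    jacobiField ρ Γ (k + 1) x ≠ 0 := by
  obtain ⟨z, hmem, hz, hstep⟩ := exists_int_orbit h.mapsTo_jacobiStep h.surjOn_jacobiStep
    (a := (x, 0, 1)) ⟨hx, mem_univ _⟩
  have hz0 : z 0 = (x, 0, 1) := hz 0
  have hmem' : ∀ n, (z n).1.2 ∈ Ioo 0 π := fun n => (hmem n).1
  have hprev : ∀ n, z n = jacobiStep ρ Γ (z (n - 1)) := fun n => by rw [← hstep, sub_add_cancel]
  have hnext_snd : ∀ n, (z (n + 1)).1.1 - (z n).1.1 = (z (n + 1)).1.2 := fun n => by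
    simp [hstep, jacobiStep, billiardMap]
  have hprev_snd : ∀ n, (z n).1.1 - (z (n - 1)).1.1 = (z n).1.2 := fun n => by
    simpa using hnext_snd (n - 1)
  have hprev_fst : ∀ n, (z (n - 1)).1.1 = (z n).1.1 - (z n).1.2 := fun n => by
    rw [← hprev_snd, sub_sub_cancel]
  have hnext_fst : ∀ n, (z (n + 1)).1.1 = (z n).1.1 + bounce Γ (z n).1.1 (z n).1.2 := fun n => by
    simp only [hstep, jacobiStep, billiardMap]
  have hval : ∀ n, (z (n - 1)).2.2 = (z n).2.1 := fun n => by rw [hprev n, jacobiStep]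
  have hk : (z k).2.2 = jacobiField ρ Γ (k + 1) x := by rw [hz, iterate_jacobiStep]
  rw [← hk]
  refine fun hzero => hnc (fun n => (z n).1.1) (fun n => ?_) (fun n => ?_) (fun n => (z n).2.2)
    (fun n => ?_) (fun h0 => ?_) ⟨-1, k, by lia, ?_, hzero⟩
  · rw [hnext_snd]
    exact sin_pos_of_mem_Ioo (hmem' _)
  · rw [hnext_fst, hprev_fst, h.height_add_bounce _ (Ioo_subset_Icc_self (hmem' n))]
  · have hsin : sin (billiardMap Γ (z n).1).2 ≠ 0 :=
      (sin_pos_of_mem_Ioo (h.mapsTo_billiardMap (hmem n).1)).ne'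
    rw [hprev_snd, hnext_snd, hval, hnext_fst, hprev_fst, hstep]
    simp only [jacobiStep]
    field_simp
    simp only [jacobiCoeff]
    ring
  · simpa [hz0] using congrFun h0 0
  · simpa [hz0] using hval 0

end IsTangentAngleParam

lemma tendsto_sub_div_sub_of_hasDerivAt {X : Type*} [TopologicalSpace X] {f r : X → ℝ → ℝ}
    {g g' : ℝ → ℝ} {p : X} (hf : ∀ x t, HasDerivAt (f x) (r x t * g' t) t)
    (hg : ∀ t, HasDerivAt g (g' t) t) (hpos : ∀ᶠ t in 𝓝[>] 0, 0 < g' t)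
    (hr : ContinuousAt (Function.uncurry r) (p, 0)) :
    Tendsto (fun y : X × ℝ => (f y.1 y.2 - f y.1 0) / (g y.2 - g 0)) (𝓝 p ×ˢ 𝓝[>] 0)
      (𝓝 (r p 0)) := by
  intro s hs
  obtain ⟨U, hU, V, hV, hUV⟩ := mem_nhds_prod_iff.1 (hr hs)
  obtain ⟨δ, hδ, hIoo⟩ :=
    mem_nhdsGT_iff_exists_Ioo_subset.1 (inter_mem (mem_nhdsWithin_of_mem_nhds hV) hpos)
  refine mem_map.2 (mem_of_superset (prod_mem_prod hU (Ioo_mem_nhdsGT hδ)) ?_)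
  rintro ⟨x, t⟩ ⟨hx, ht⟩
  have hfc : ContinuousOn (f x) (Icc 0 t) := HasDerivAt.continuousOn fun t _ => hf x t
  have hgc : ContinuousOn g (Icc 0 t) := HasDerivAt.continuousOn fun t _ => hg t
  obtain ⟨c, hc, hratio⟩ := exists_ratio_hasDerivAt_eq_ratio_slope (f x) _ ht.1 hfc
    (fun t _ => hf x t) g g' hgc fun t _ => hg t
  obtain ⟨d, hd, hslope⟩ := exists_hasDerivAt_eq_slope g g' ht.1 hgc fun t _ => hg t
  have hIoo' : Ioo 0 t ⊆ V ∩ {t | 0 < g' t} := (Ioo_subset_Ioo_right ht.2.le).trans hIoo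
  have hgt : g t - g 0 ≠ 0 := fun h0 =>
    (hIoo' hd).2.ne' (hslope.trans (by simp only [h0, zero_div]))
  have hquot : (f x t - f x 0) / (g t - g 0) = r x c := by
    rw [div_eq_iff hgt]
    refine mul_right_cancel₀ (hIoo' hc).2.ne' ?_
    rw [← hratio]
    ring
  rw [mem_preimage, hquot]
  exact hUV (mk_mem_prod hx (hIoo' hc).1)

lemma nhdsWithin_phaseSpace (p : ℝ) : 𝓝[phaseSpace] ((p, 0) : ℝ × ℝ) = 𝓝 p ×ˢ 𝓝[>] 0 := by
  have hprod : phaseSpace = univ ×ˢ Ioo 0 π := by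
    ext x
    simp [phaseSpace]
  rw [hprod, nhdsWithin_prod_eq, nhdsWithin_univ, nhdsWithin_Ioo_eq_nhdsGT pi_pos]

lemma eventually_sin_pos : ∀ᶠ t in 𝓝[>] 0, 0 < sin t :=
  mem_of_superset (Ioo_mem_nhdsGT pi_pos) fun _ => sin_pos_of_mem_Ioo

lemma eventually_cos_pos : ∀ᶠ t in 𝓝[>] 0, 0 < cos t :=
  mem_of_superset (Ioo_mem_nhdsGT pi_div_two_pos) fun _ ht =>
    cos_pos_of_mem_Ioo ⟨by linarith [ht.1, pi_div_two_pos], ht.2⟩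

namespace IsTangentAngleParam

variable {ρ : ℝ → ℝ} {Γ : ℝ → ℝ × ℝ}

lemma tendsto_height_add (h : IsTangentAngleParam (2 * π) ρ Γ) (p : ℝ) :
    Tendsto (fun x : ℝ × ℝ => (height Γ x.1 (x.1 + x.2) - height Γ x.1 x.1) / (1 - cos x.2))
      (𝓝[phaseSpace] (p, 0)) (𝓝 (ρ p)) := by
  have hρ := h.continuous_radius
  have := tendsto_sub_div_sub_of_hasDerivAt (p := p) h.hasDerivAt_height_add
    (fun t => (hasDerivAt_cos t).neg.congr_deriv (neg_neg _)) eventually_sin_pos (by fun_prop)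
  simpa [nhdsWithin_phaseSpace, neg_add_eq_sub] using this

lemma tendsto_height_sub (h : IsTangentAngleParam (2 * π) ρ Γ) (p : ℝ) :
    Tendsto (fun x : ℝ × ℝ => (height Γ x.1 (x.1 - x.2) - height Γ x.1 x.1) / (1 - cos x.2))
      (𝓝[phaseSpace] (p, 0)) (𝓝 (ρ p)) := by
  have hρ := h.continuous_radius
  have := tendsto_sub_div_sub_of_hasDerivAt (p := p) h.hasDerivAt_height_sub
    (fun t => (hasDerivAt_cos t).neg.congr_deriv (neg_neg _)) eventually_sin_pos (by fun_prop)
  simpa [nhdsWithin_phaseSpace, neg_add_eq_sub] using this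

lemma tendsto_along_add (h : IsTangentAngleParam (2 * π) ρ Γ) (p : ℝ) :
    Tendsto (fun x : ℝ × ℝ => (along Γ x.1 (x.1 + x.2) - along Γ x.1 x.1) / sin x.2)
      (𝓝[phaseSpace] (p, 0)) (𝓝 (ρ p)) := by
  have hρ := h.continuous_radius
  have := tendsto_sub_div_sub_of_hasDerivAt (p := p) h.hasDerivAt_along_add
    hasDerivAt_sin eventually_cos_pos (by fun_prop)
  simpa [nhdsWithin_phaseSpace] using this

lemma tendsto_along_sub (h : IsTangentAngleParam (2 * π) ρ Γ) (p : ℝ) :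
    Tendsto (fun x : ℝ × ℝ => (along Γ x.1 x.1 - along Γ x.1 (x.1 - x.2)) / sin x.2)
      (𝓝[phaseSpace] (p, 0)) (𝓝 (ρ p)) := by
  have hρ := h.continuous_radius
  have := tendsto_sub_div_sub_of_hasDerivAt (p := p)
    (fun x t => (h.hasDerivAt_along_sub x t).neg.congr_deriv (neg_neg _))
    hasDerivAt_sin eventually_cos_pos (by fun_prop)
  simpa [nhdsWithin_phaseSpace, neg_add_eq_sub] using this

lemma tendsto_prodMk_bounce (h : IsTangentAngleParam (2 * π) ρ Γ) (p : ℝ) :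
    Tendsto (fun x : ℝ × ℝ => (x.1, bounce Γ x.1 x.2)) (𝓝[phaseSpace] (p, 0))
      (𝓝[phaseSpace] (p, 0)) := by
  have hcont := continuous_fst.prodMk h.continuous_bounce
  have hmaps : MapsTo (fun x : ℝ × ℝ => (x.1, bounce Γ x.1 x.2)) phaseSpace phaseSpace :=
    fun x hx => h.bounce_mem_Ioo x.1 hx
  simpa [h.bounce_zero] using hcont.continuousWithinAt.tendsto_nhdsWithin (x := (p, 0)) hmaps

lemma tendsto_billiardMap (h : IsTangentAngleParam (2 * π) ρ Γ) (p : ℝ) :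
    Tendsto (billiardMap Γ) (𝓝[phaseSpace] (p, 0)) (𝓝[phaseSpace] (p, 0)) := by
  simpa [billiardMap, h.bounce_zero] using
    h.continuous_billiardMap.continuousWithinAt.tendsto_nhdsWithin (x := (p, 0))
      h.mapsTo_billiardMap

lemma tendsto_one_sub_cos_bounce_div (h : IsTangentAngleParam (2 * π) ρ Γ) (p : ℝ) :
    Tendsto (fun x : ℝ × ℝ => (1 - cos (bounce Γ x.1 x.2)) / (1 - cos x.2))
      (𝓝[phaseSpace] (p, 0)) (𝓝 1) := by
  have hρp := (h.pos p).ne'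
  have hquot := (h.tendsto_height_sub p).div
    ((h.tendsto_height_add p).comp (h.tendsto_prodMk_bounce p)) hρp
  rw [div_self hρp] at hquot
  refine hquot.congr' ?_
  filter_upwards [self_mem_nhdsWithin, (h.tendsto_height_sub p).eventually_ne hρp] with x hx hne
  simp only [Pi.div_apply, Function.comp_apply, h.height_add_bounce x.1 (Ioo_subset_Icc_self hx)]
  exact div_div_div_cancel_left' _ _ (div_ne_zero_iff.1 hne).1

lemma tendsto_sin_bounce_div (h : IsTangentAngleParam (2 * π) ρ Γ) (p : ℝ) :
    Tendsto (fun x : ℝ × ℝ => sin (bounce Γ x.1 x.2) / sin x.2) (𝓝[phaseSpace] (p, 0)) (𝓝 1) := by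
  have hcos : Tendsto (fun x : ℝ × ℝ => 1 + cos x.2) (𝓝[phaseSpace] (p, 0)) (𝓝 2) :=
    ((by fun_prop : Continuous fun x : ℝ × ℝ => 1 + cos x.2).tendsto' _ _
      (by norm_num)).mono_left nhdsWithin_le_nhds
  have hcos' := (hcos.comp (h.tendsto_prodMk_bounce p)).div hcos two_ne_zero
  have hsq := ((h.tendsto_one_sub_cos_bounce_div p).mul hcos').sqrt
  rw [div_self two_ne_zero, one_mul, sqrt_one] at hsq
  refine hsq.congr' ?_
  filter_upwards [self_mem_nhdsWithin] with x hx
  have hfactor : ∀ u, (1 - cos u) * (1 + cos u) = sin u ^ 2 := fun u => by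
    rw [sin_sq]
    ring
  simp only [Pi.div_apply, Function.comp_apply, div_mul_div_comm, hfactor]
  rw [← div_pow, sqrt_sq]
  exact (div_pos (sin_pos_of_mem_Ioo (h.bounce_mem_Ioo x.1 hx)) (sin_pos_of_mem_Ioo hx)).le

lemma tendsto_jacobiCoeff_div_sin (h : IsTangentAngleParam (2 * π) ρ Γ) (p : ℝ) :
    Tendsto (fun x : ℝ × ℝ => jacobiCoeff ρ Γ x / sin x.2) (𝓝[phaseSpace] (p, 0)) (𝓝 2) := by
  have hρp := (h.pos p).ne'
  have hρ : Tendsto (fun x : ℝ × ℝ => ρ x.1) (𝓝[phaseSpace] (p, 0)) (𝓝 (ρ p)) :=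
    ((h.continuous_radius.comp continuous_fst).tendsto' _ _ rfl).mono_left nhdsWithin_le_nhds
  have hquot := ((((h.tendsto_along_add p).comp (h.tendsto_prodMk_bounce p)).mul
    (h.tendsto_sin_bounce_div p)).add (h.tendsto_along_sub p)).div hρ hρp
  rw [mul_one, ← two_mul, mul_div_cancel_right₀ _ hρp] at hquot
  refine hquot.congr' ?_
  filter_upwards [self_mem_nhdsWithin] with x hx
  have hsin := (sin_pos_of_mem_Ioo hx).ne'
  have hsin' := (sin_pos_of_mem_Ioo (h.bounce_mem_Ioo x.1 hx)).ne'
  have hρx := (h.pos x.1).ne'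
  simp only [Pi.div_apply, Function.comp_apply, jacobiCoeff]
  field_simp
  ring

lemma tendsto_jacobiField (h : IsTangentAngleParam (2 * π) ρ Γ) (p : ℝ) (k : ℕ) :
    Tendsto (jacobiField ρ Γ k) (𝓝[phaseSpace] (p, 0)) (𝓝 k) := by
  induction k using Nat.twoStepInduction with
  | zero => exact tendsto_const_nhds.congr fun _ => by simp [jacobiField]
  | one => exact tendsto_const_nhds.congr fun x => by simp [jacobiField, jacobiStep]
  | more k ih₀ ih₁ =>
    have horbit := (h.tendsto_billiardMap p).iterate k
    have hquot := ((((h.tendsto_jacobiCoeff_div_sin p).comp horbit).mul ih₁).sub ih₀).div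
      ((h.tendsto_sin_bounce_div p).comp horbit) one_ne_zero
    rw [div_one, show 2 * ((k + 1 : ℕ) : ℝ) - k = (k + 2 : ℕ) by push_cast; ring] at hquot
    refine hquot.congr' ?_
    filter_upwards [self_mem_nhdsWithin] with x hx
    have hsin := (h.sin_iterate_pos hx k).ne'
    have hsin' := (h.sin_iterate_pos hx (k + 1)).ne'
    rw [jacobiField_add_two]
    rw [Function.iterate_succ_apply'] at hsin' ⊢
    simp only [billiardMap, Pi.div_apply, Function.comp_apply] at hsin' ⊢
    field_simp

lemma jacobiField_pos (h : IsTangentAngleParam (2 * π) ρ Γ) (hnc : NoConjugatePointsAngle ρ Γ)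
    {x : ℝ × ℝ} (hx : x ∈ phaseSpace) (k : ℕ) : 0 < jacobiField ρ Γ (k + 1) x := by
  have hconv : Convex ℝ phaseSpace := (convex_Ioo 0 π).linear_preimage (LinearMap.snd ℝ ℝ ℝ)
  have : (𝓝[phaseSpace] ((0, 0) : ℝ × ℝ)).NeBot := by
    rw [nhdsWithin_phaseSpace]
    infer_instance
  obtain ⟨y, hypos, hy⟩ := (((h.tendsto_jacobiField 0 (k + 1)).eventually
    (lt_mem_nhds (by positivity : (0 : ℝ) < (k + 1 : ℕ)))).and self_mem_nhdsWithin).exists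
  by_contra! hle
  obtain ⟨w, hw, hw0⟩ := hconv.isPreconnected.intermediate_value hx hy
    (h.continuousOn_jacobiField (k + 1)) ⟨hle, hypos.le⟩
  exact h.jacobiField_ne_zero hnc hw k hw0

end IsTangentAngleParam

/-- The ratios `z (k + 2) / z (k + 1)` solve a discrete Riccati equation. -/
lemma two_mul_sum_le_of_jacobi {s a z : ℕ → ℝ} (hs : ∀ k, 0 < s k) (hz : ∀ k, 0 < z (k + 1))
    (hz0 : z 0 = 0) (hrec : ∀ k, a k * z (k + 1) = s (k + 1) * z (k + 2) + s k * z k) (N : ℕ) :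
    2 * ∑ k ∈ Finset.range N, s (k + 1) ≤ ∑ k ∈ Finset.range (N + 1), a k := by
  suffices hmain : 2 * ∑ k ∈ Finset.range N, s (k + 1) + s (N + 1) * z (N + 2) / z (N + 1) ≤
      ∑ k ∈ Finset.range (N + 1), a k from
    (le_add_of_nonneg_right
      (div_nonneg (mul_nonneg (hs _).le (hz _).le) (hz _).le)).trans hmain
  have ha : ∀ k, a k = s (k + 1) * z (k + 2) / z (k + 1) + s k * z k / z (k + 1) := fun k => by
    rw [← add_div, eq_div_iff (hz k).ne', hrec]
  induction N with
  | zero => simp [ha, hz0]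
  | succ N ih =>
    have hamgm : 2 * s (N + 1) ≤
        s (N + 1) * z (N + 2) / z (N + 1) + s (N + 1) * z (N + 1) / z (N + 2) := by
      have hz₁ := hz N
      have hz₂ := hz (N + 1)
      rw [div_add_div _ _ hz₁.ne' hz₂.ne', le_div_iff₀ (mul_pos hz₁ hz₂)]
      nlinarith [mul_nonneg (hs (N + 1)).le (sq_nonneg (z (N + 2) - z (N + 1)))]
    rw [Finset.sum_range_succ _ N, Finset.sum_range_succ _ (N + 1), ha (N + 1)]
    linarith

namespace IsTangentAngleParam

variable {ρ : ℝ → ℝ} {Γ : ℝ → ℝ × ℝ}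

lemma birkhoffSum_sin_le (h : IsTangentAngleParam (2 * π) ρ Γ) (hnc : NoConjugatePointsAngle ρ Γ)
    {x : ℝ × ℝ} (hx : x ∈ phaseSpace) (N : ℕ) :
    2 * birkhoffSum (billiardMap Γ) (fun x => sin x.2) N (billiardMap Γ x) ≤
      birkhoffSum (billiardMap Γ) (jacobiCoeff ρ Γ) (N + 1) x := by
  refine two_mul_sum_le_of_jacobi (s := fun k => sin ((billiardMap Γ)^[k] x).2)
    (z := fun k => jacobiField ρ Γ k x) (h.sin_iterate_pos hx) (h.jacobiField_pos hnc hx)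
    (by simp [jacobiField]) (fun k => ?_) N
  have := (h.sin_iterate_pos hx (k + 1)).ne'
  rw [jacobiField_add_two]
  field_simp
  ring

end IsTangentAngleParam

/-- The Fourier coefficients of a real function on `[0, 2π]`. -/
noncomputable def realFourierCoeff (f : ℝ → ℝ) (n : ℤ) : ℂ :=
  fourierCoeffOn two_pi_pos (fun x => (f x : ℂ)) n

lemma realFourierCoeff_zero (f : ℝ → ℝ) :
    realFourierCoeff f 0 = ((2 * π)⁻¹ * ∫ x in 0..2 * π, f x : ℝ) := by
  simp [realFourierCoeff, fourierCoeffOn_eq_integral, intervalIntegral.integral_ofReal]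

lemma realFourierCoeff_add {f g : ℝ → ℝ} (hf : Continuous f) (hg : Continuous g) (n : ℤ) :
    realFourierCoeff (f + g) n = realFourierCoeff f n + realFourierCoeff g n := by
  have hchar : Continuous fun x : ℝ => fourier (-n) (x : AddCircle (2 * π - 0)) :=
    (map_continuous _).comp (AddCircle.continuous_mk' _)
  simp only [realFourierCoeff, fourierCoeffOn_eq_integral]
  rw [← smul_add, ← intervalIntegral.integral_add]
  · simp only [Pi.add_apply, Complex.ofReal_add, smul_add]
  all_goals exact Continuous.intervalIntegrable (by fun_prop) _ _

lemma realFourierCoeff_deriv {f f' : ℝ → ℝ} (hf : ∀ x, HasDerivAt f (f' x) x)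
    (hf' : Continuous f') (hper : f (2 * π) = f 0) (n : ℤ) :
    realFourierCoeff f' n = Complex.I * n * realFourierCoeff f n := by
  rcases eq_or_ne n 0 with rfl | hn
  · rw [realFourierCoeff_zero, intervalIntegral.integral_eq_sub_of_hasDerivAt (fun x _ => hf x)
      (hf'.intervalIntegrable _ _), hper]
    simp
  · have hparts := fourierCoeffOn_of_hasDerivAt two_pi_pos hn (fun x _ => (hf x).ofReal_comp)
      (Continuous.intervalIntegrable (by fun_prop) _ _)
    simp only [hper, sub_self, mul_zero, zero_sub] at hparts
    have hn' : (n : ℂ) ≠ 0 := Int.cast_ne_zero.2 hn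
    have hπ : (π : ℂ) ≠ 0 := Complex.ofReal_ne_zero.2 pi_ne_zero
    rw [realFourierCoeff, realFourierCoeff, hparts]
    push_cast
    field_simp
    ring

lemma hasSum_sq_realFourierCoeff {f : ℝ → ℝ} (hf : Continuous f) :
    HasSum (fun n => ‖realFourierCoeff f n‖ ^ 2) ((2 * π)⁻¹ * ∫ x in 0..2 * π, f x ^ 2) := by
  have hf' : Continuous fun x => (f x : ℂ) := by fun_prop
  obtain ⟨C, hC⟩ := isCompact_Icc.exists_bound_of_continuousOn (s := Icc 0 (2 * π)) hf'.continuousOn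
  have hmem : MemLp (fun x => (f x : ℂ)) 2 (volume.restrict (Ioc 0 (2 * π))) :=
    MemLp.of_bound hf'.aestronglyMeasurable C <|
      ae_restrict_of_forall_mem measurableSet_Ioc fun x hx => hC x (Ioc_subset_Icc_self hx)
  simpa [realFourierCoeff] using hasSum_sq_fourierCoeffOn two_pi_pos hmem

/-- Equality in Wirtinger's inequality leaves only the Fourier modes `±1`. -/
lemma add_deriv_deriv_eq_zero_of_integral_le {f f' f'' : ℝ → ℝ} (hf : ∀ x, HasDerivAt f (f' x) x)
    (hf' : ∀ x, HasDerivAt f' (f'' x) x) (hf'' : Continuous f'') (hper : f (2 * π) = f 0)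
    (hper' : f' (2 * π) = f' 0) (hmean : ∫ x in 0..2 * π, f x = 0)
    (hle : ∫ x in 0..2 * π, f' x ^ 2 ≤ ∫ x in 0..2 * π, f x ^ 2) :
    ∀ x ∈ Icc 0 (2 * π), f x + f'' x = 0 := by
  have hfc : Continuous f := continuous_iff_continuousAt.2 fun x => (hf x).continuousAt
  have hfc' : Continuous f' := continuous_iff_continuousAt.2 fun x => (hf' x).continuousAt
  have hderiv := realFourierCoeff_deriv hf hfc' hper
  have hgap : HasSum (fun n : ℤ => ((n : ℝ) ^ 2 - 1) * ‖realFourierCoeff f n‖ ^ 2)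
      ((2 * π)⁻¹ * (∫ x in 0..2 * π, f' x ^ 2) - (2 * π)⁻¹ * ∫ x in 0..2 * π, f x ^ 2) := by
    convert! (hasSum_sq_realFourierCoeff hfc').sub (hasSum_sq_realFourierCoeff hfc) using 2 with n
    simp only [hderiv, norm_mul, Complex.norm_I, Complex.norm_intCast, one_mul, mul_pow, sq_abs]
    ring
  have hnonneg : ∀ n : ℤ, 0 ≤ ((n : ℝ) ^ 2 - 1) * ‖realFourierCoeff f n‖ ^ 2 := fun n => by
    rcases eq_or_ne n 0 with rfl | hn
    · simp [realFourierCoeff_zero, hmean]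
    · have hn_sq : (1 : ℝ) ≤ (n : ℝ) ^ 2 := by exact_mod_cast sq_pos_of_ne_zero hn
      exact mul_nonneg (sub_nonneg.2 hn_sq) (sq_nonneg _)
  have hgap_zero := (hasSum_zero_iff_of_nonneg hnonneg).1 <| by
    convert hgap
    refine le_antisymm (hgap.nonneg hnonneg) ?_
    rw [← mul_sub]
    exact mul_nonpos_of_nonneg_of_nonpos (inv_nonneg.2 two_pi_pos.le) (sub_nonpos.2 hle)
  have hcoeff : ∀ n, realFourierCoeff (f + f'') n = 0 := fun n => by
    rw [realFourierCoeff_add hfc hf'', realFourierCoeff_deriv hf' hf'' hper', hderiv]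
    have hn : ((n : ℂ) ^ 2 - 1) * realFourierCoeff f n = 0 := by
      rcases mul_eq_zero.1 (congrFun hgap_zero n) with hn | hn
      · rw [show (n : ℂ) ^ 2 - 1 = 0 by exact_mod_cast hn, zero_mul]
      · rw [norm_eq_zero.1 (pow_eq_zero_iff two_ne_zero |>.1 hn), mul_zero]
    linear_combination -hn + (n : ℂ) ^ 2 * realFourierCoeff f n * Complex.I_sq
  have hsq : ∫ x in 0..2 * π, (f + f'') x ^ 2 = 0 := by
    have hsum := hasSum_sq_realFourierCoeff (hfc.add hf'')
    simp only [hcoeff, norm_zero, zero_pow two_ne_zero] at hsum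
    exact (mul_eq_zero.1 (hsum.unique hasSum_zero)).resolve_left (inv_ne_zero two_pi_pos.ne')
  by_contra! hne
  obtain ⟨x, hx, hx0⟩ := hne
  refine (intervalIntegral.integral_pos two_pi_pos (by fun_prop) (fun _ _ => sq_nonneg _)
    ⟨x, hx, ?_⟩).ne' hsq
  exact sq_pos_of_ne_zero hx0

/-- A set is an ellipse if it is an affine image of the unit circle. -/
def IsEllipse (s : Set (ℝ × ℝ)) : Prop :=
  ∃ f : (ℝ × ℝ) ≃ᵃ[ℝ] (ℝ × ℝ), s = f '' unitCircle

lemma IsEllipse.image {s : Set (ℝ × ℝ)} (hs : IsEllipse s) (f : (ℝ × ℝ) ≃ᵃ[ℝ] (ℝ × ℝ)) :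
    IsEllipse (f '' s) := by
  obtain ⟨g, rfl⟩ := hs
  exact ⟨g.trans f, by rw [image_image]; rfl⟩

lemma range_dir : range dir = unitCircle := by
  ext p
  refine ⟨?_, fun hp => ?_⟩
  · rintro ⟨φ, rfl⟩
    exact cos_sq_add_sin_sq φ
  · have hp' : ‖(⟨p.1, p.2⟩ : ℂ)‖ = 1 := by
      rw [Complex.norm_def, sqrt_eq_one, Complex.normSq_mk, ← sq, ← sq]
      exact hp
    refine ⟨Complex.arg ⟨p.1, p.2⟩, Prod.ext ?_ ?_⟩
    · simpa [dir, hp'] using Complex.norm_mul_cos_arg ⟨p.1, p.2⟩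
    · simpa [dir, hp'] using Complex.norm_mul_sin_arg ⟨p.1, p.2⟩

lemma hasDerivAt_dir (φ : ℝ) : HasDerivAt dir (dir (φ + π / 2)) φ := by
  refine ((hasDerivAt_cos φ).prodMk (hasDerivAt_sin φ)).congr_deriv ?_
  rw [dir, cos_add_pi_div_two, sin_add_pi_div_two]

namespace IsTangentAngleParam

variable {ρ : ℝ → ℝ} {Γ : ℝ → ℝ × ℝ}

lemma hasDerivAt_support (h : IsTangentAngleParam (2 * π) ρ Γ) (φ : ℝ) :
    HasDerivAt (support Γ) (along Γ φ φ) φ := by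
  refine (((h.hasDerivAt_fst φ).mul (hasDerivAt_sin φ)).sub
    ((hasDerivAt_cos φ).mul (h.hasDerivAt_snd φ))).congr_deriv ?_
  simp only [along]
  ring

lemma hasDerivAt_along_self (h : IsTangentAngleParam (2 * π) ρ Γ) (φ : ℝ) :
    HasDerivAt (fun ψ => along Γ ψ ψ) (ρ φ - support Γ φ) φ := by
  refine (((hasDerivAt_cos φ).mul (h.hasDerivAt_fst φ)).add
    ((hasDerivAt_sin φ).mul (h.hasDerivAt_snd φ))).congr_deriv ?_
  simp only [support, om_apply, dir]
  linear_combination ρ φ * sin_sq_add_cos_sq φ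

lemma support_periodic (h : IsTangentAngleParam (2 * π) ρ Γ) :
    Function.Periodic (support Γ) (2 * π) := fun φ => by
  simp [support, dir, h.periodic φ]

lemma along_self_periodic (h : IsTangentAngleParam (2 * π) ρ Γ) :
    Function.Periodic (fun ψ => along Γ ψ ψ) (2 * π) := fun φ => by
  simp [along_add_two_pi_left, h.along_periodic φ φ]

lemma integral_support (h : IsTangentAngleParam (2 * π) ρ Γ) :
    ∫ φ in 0..2 * π, support Γ φ = ∫ φ in 0..2 * π, ρ φ := by
  have hρ := h.continuous_radius
  have hsupport := h.continuous_support
  have hint := intervalIntegral.integral_eq_sub_of_hasDerivAt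
    (fun φ _ => h.hasDerivAt_along_self φ) ((hρ.sub hsupport).intervalIntegrable 0 (2 * π))
  rw [h.along_self_periodic.eq, sub_self, intervalIntegral.integral_sub
    (hρ.intervalIntegrable _ _) (hsupport.intervalIntegrable _ _)] at hint
  exact (sub_eq_zero.1 hint).symm

lemma integral_support_mul_radius (h : IsTangentAngleParam (2 * π) ρ Γ) :
    ∫ φ in 0..2 * π, support Γ φ * ρ φ =
      (∫ φ in 0..2 * π, support Γ φ ^ 2) - ∫ φ in 0..2 * π, along Γ φ φ ^ 2 := by
  have hρ := h.continuous_radius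
  have hsupport := h.continuous_support
  have halong : Continuous fun φ => along Γ φ φ :=
    h.continuous_along.comp (continuous_id.prodMk continuous_id)
  have hint := intervalIntegral.integral_eq_sub_of_hasDerivAt
    (fun φ _ => (h.hasDerivAt_support φ).mul (h.hasDerivAt_along_self φ))
    (Continuous.intervalIntegrable (by fun_prop) 0 (2 * π))
  simp only [Pi.mul_apply, h.along_self_periodic.eq, h.support_periodic.eq, sub_self] at hint
  rw [← sub_eq_zero, ← intervalIntegral.integral_sub, ← intervalIntegral.integral_sub, ← hint]
  · congr with φ
    ring
  all_goals exact Continuous.intervalIntegrable (by fun_prop) _ _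

/-- The hypothesis reverses the isoperimetric inequality, whose equality case is that of Wirtinger's
inequality for the support function. -/
lemma radius_eq_of_sq_integral_le (h : IsTangentAngleParam (2 * π) ρ Γ)
    (hle : (∫ φ in 0..2 * π, ρ φ) ^ 2 / 2 ≤ π * ∫ φ in 0..2 * π, support Γ φ * ρ φ) (φ : ℝ) :
    ρ φ = (2 * π)⁻¹ * ∫ φ in 0..2 * π, ρ φ := by
  have hρ := h.continuous_radius
  have hsupport := h.continuous_support
  set m := (2 * π)⁻¹ * ∫ φ in 0..2 * π, ρ φ with hm
  have hρm : ∫ φ in 0..2 * π, ρ φ = 2 * π * m := by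
    rw [hm, mul_inv_cancel_left₀ two_pi_pos.ne']
  have hmean : ∫ φ in 0..2 * π, (support Γ φ - m) = 0 := by
    rw [intervalIntegral.integral_sub (hsupport.intervalIntegrable _ _) (by simp),
      h.integral_support, hρm]
    simp
  have hsq : ∫ φ in 0..2 * π, (support Γ φ - m) ^ 2 =
      (∫ φ in 0..2 * π, support Γ φ ^ 2) - 2 * π * m ^ 2 := by
    have hexpand : ∀ φ, (support Γ φ - m) ^ 2 = support Γ φ ^ 2 - (2 * m * support Γ φ - m ^ 2) :=
      fun φ => by ring
    simp only [hexpand]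
    rw [intervalIntegral.integral_sub, intervalIntegral.integral_sub,
      intervalIntegral.integral_const_mul, h.integral_support, hρm]
    · simp
      ring
    all_goals exact Continuous.intervalIntegrable (by fun_prop) _ _
  have hgap : 2 * π * m ^ 2 ≤
      (∫ φ in 0..2 * π, support Γ φ ^ 2) - ∫ φ in 0..2 * π, along Γ φ φ ^ 2 := by
    rw [hρm, h.integral_support_mul_radius] at hle
    refine le_of_mul_le_mul_left ?_ pi_pos
    linarith
  have hzero := add_deriv_deriv_eq_zero_of_integral_le
    (fun φ => (h.hasDerivAt_support φ).sub_const m) h.hasDerivAt_along_self (hρ.sub hsupport)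
    (by simp only [h.support_periodic.eq]) h.along_self_periodic.eq hmean (by linarith)
  obtain ⟨ψ, hψ, hφψ⟩ := h.radius_periodic.exists_mem_Ico₀ two_pi_pos φ
  rw [hφψ]
  linarith [hzero ψ (Ico_subset_Icc_self hψ)]

lemma isEllipse_range (h : IsTangentAngleParam (2 * π) ρ Γ) {r : ℝ} (hr : ∀ φ, ρ φ = r) :
    IsEllipse (range Γ) := by
  have hr0 : r ≠ 0 := hr 0 ▸ (h.pos 0).ne'
  set f := (LinearEquiv.smulOfNeZero ℝ (ℝ × ℝ) r hr0).toAffineEquiv.trans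
    (AffineEquiv.constVAdd ℝ (ℝ × ℝ) (Γ 0 - r • dir (0 - π / 2)))
  have hderiv : ∀ φ, HasDerivAt (fun ψ => Γ ψ - r • dir (ψ - π / 2)) 0 φ := fun φ => by
    have hdir := ((hasDerivAt_dir (φ - π / 2)).comp_sub_const φ (π / 2)).const_smul r
    refine ((h.hasDerivAt φ).sub hdir).congr_deriv ?_
    rw [hr, sub_add_cancel, sub_self]
  have hconst := is_const_of_deriv_eq_zero (fun φ => (hderiv φ).differentiableAt)
    fun φ => (hderiv φ).deriv
  have hΓ : ∀ φ, Γ φ = f (dir (φ - π / 2)) := fun φ => sub_eq_iff_eq_add.1 (hconst φ 0)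
  refine ⟨f, ?_⟩
  rw [← range_dir, ← range_comp, funext hΓ]
  exact (Equiv.subRight (π / 2)).surjective.range_comp (f ∘ dir)

/-- The two trigonometric conditions normalize `Γ` within its orbit under area preserving affine
maps. -/
lemma isEllipse_range_of_noConjugatePoints (h : IsTangentAngleParam (2 * π) ρ Γ)
    (hcos : ∫ φ in 0..2 * π, ρ φ * cos (2 * φ) = 0)
    (hsin : ∫ φ in 0..2 * π, ρ φ * sin (2 * φ) = 0) (hnc : NoConjugatePointsAngle ρ Γ) :
    IsEllipse (range Γ) :=
  h.isEllipse_range <| h.radius_eq_of_sq_integral_le <| h.sq_integral_radius_le hcos hsin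
    fun _ hx N => h.birkhoffSum_sin_le hnc hx N

end IsTangentAngleParam

lemma exists_hasDerivAt_exp_eq {g g' : ℝ → ℂ} (hg : ∀ t, HasDerivAt g (g' t) t)
    (hg' : Continuous g') (hne : ∀ t, g t ≠ 0) :
    ∃ P : ℝ → ℂ, (∀ t, HasDerivAt P (g' t / g t) t) ∧ ∀ t, Complex.exp (P t) = g t := by
  have hcont : Continuous fun t => g' t / g t :=
    hg'.div (continuous_iff_continuousAt.2 fun t => (hg t).continuousAt) hne
  set P : ℝ → ℂ := fun t => Complex.log (g 0) + ∫ s in 0..t, g' s / g s with hP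
  have hderiv : ∀ t, HasDerivAt P (g' t / g t) t := fun t =>
    (hcont.integral_hasStrictDerivAt 0 t).hasDerivAt.const_add _
  have hquot : ∀ t, HasDerivAt (fun t => Complex.exp (P t) / g t) 0 t := fun t => by
    refine ((hderiv t).cexp.div (hg t) (hne t)).congr_deriv ?_
    have := hne t
    field_simp
    ring
  refine ⟨P, hderiv, fun t => (div_eq_one_iff_eq (hne t)).1 ?_⟩
  calc Complex.exp (P t) / g t = Complex.exp (P 0) / g 0 :=
        is_const_of_deriv_eq_zero (fun t => (hquot t).differentiableAt)
          (fun t => (hquot t).deriv) t 0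
    _ = 1 := by simp [hP, Complex.exp_log (hne 0), hne 0]

lemma injOn_Ico_of_periodic {α : Type*} {f : ℝ → α} {c : ℝ} (hc : 0 < c)
    (hf : Function.Periodic f c) (hinj : InjOn f (Ico 0 c)) (a : ℝ) :
    InjOn f (Ico a (a + c)) := by
  intro s hs t ht hst
  rw [← (toIcoMod_eq_self hc).2 hs, ← (toIcoMod_eq_self hc).2 ht, toIcoMod_inj]
  have hmod : ∀ x, f (toIcoMod hc 0 x) = f x := fun x => by
    rw [← self_sub_toIcoDiv_zsmul, hf.sub_zsmul_eq]
  exact (toIcoMod_inj hc).1 <| hinj (toIcoMod_mem_Ico' hc s) (toIcoMod_mem_Ico' hc t) <| by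
    rw [hmod, hmod, hst]

/-- The Euclidean norm of a vector, as opposed to the supremum norm of `ℝ × ℝ`. -/
noncomputable def euclNorm (u : ℝ × ℝ) : ℝ := ‖Complex.equivRealProdCLM.symm u‖

/-- The derivative of the tangent angle of the curve `γ`. -/
noncomputable def turnRate (γ : ℝ → ℝ × ℝ) (t : ℝ) : ℝ :=
  om (deriv γ t) (deriv (deriv γ) t) / euclNorm (deriv γ t) ^ 2

/-- A simple closed plane curve of class `C²`, of period `ℓ` and everywhere turning left. -/
structure IsOval (ℓ : ℝ) (γ : ℝ → ℝ × ℝ) : Prop where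
  pos : 0 < ℓ
  contDiff : ContDiff ℝ 2 γ
  periodic : Function.Periodic γ ℓ
  injOn : InjOn γ (Ico 0 ℓ)
  om_pos : ∀ t, 0 < om (deriv γ t) (deriv (deriv γ) t)

/-- Nonzero Jacobi fields along symplectic billiard configurations in `γ` vanish at most once. -/
def NoConjugatePoints (γ : ℝ → ℝ × ℝ) : Prop :=
  ∀ t : ℤ → ℝ, IsConfiguration γ t → ∀ ξ : ℤ → ℝ, IsJacobiField γ t ξ → ξ ≠ 0 →
    ¬∃ M N : ℤ, M < N ∧ ξ M = 0 ∧ ξ N = 0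

lemma euclNorm_pos {u : ℝ × ℝ} : 0 < euclNorm u ↔ u ≠ 0 := by
  simp [euclNorm]

@[fun_prop]
lemma continuous_euclNorm : Continuous euclNorm := by
  unfold euclNorm
  fun_prop

namespace IsOval

variable {ℓ : ℝ} {γ : ℝ → ℝ × ℝ}

lemma hasDerivAt (h : IsOval ℓ γ) (t : ℝ) : HasDerivAt γ (deriv γ t) t :=
  (h.contDiff.differentiable two_ne_zero t).hasDerivAt

lemma contDiff_deriv (h : IsOval ℓ γ) : ContDiff ℝ 1 (deriv γ) :=
  (contDiff_succ_iff_deriv (n := 1).1 h.contDiff).2.2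

lemma hasDerivAt_deriv (h : IsOval ℓ γ) (t : ℝ) :
    HasDerivAt (deriv γ) (deriv (deriv γ) t) t :=
  (h.contDiff_deriv.differentiable one_ne_zero t).hasDerivAt

lemma continuous_deriv_deriv (h : IsOval ℓ γ) : Continuous (deriv (deriv γ)) :=
  h.contDiff_deriv.continuous_deriv le_rfl

lemma periodic_deriv (h : IsOval ℓ γ) : Function.Periodic (deriv γ) ℓ := fun t => by
  rw [← deriv_comp_add_const, h.periodic.funext]

lemma periodic_deriv_deriv (h : IsOval ℓ γ) : Function.Periodic (deriv (deriv γ)) ℓ := fun t => by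
  rw [← deriv_comp_add_const, h.periodic_deriv.funext]

lemma deriv_ne_zero (h : IsOval ℓ γ) (t : ℝ) : deriv γ t ≠ 0 := fun h0 => by
  have hpos := h.om_pos t
  simp [om_apply, h0] at hpos

lemma euclNorm_deriv_pos (h : IsOval ℓ γ) (t : ℝ) : 0 < euclNorm (deriv γ t) :=
  euclNorm_pos.2 (h.deriv_ne_zero t)

lemma turnRate_pos (h : IsOval ℓ γ) (t : ℝ) : 0 < turnRate γ t :=
  div_pos (h.om_pos t) (pow_pos (h.euclNorm_deriv_pos t) 2)

lemma continuous_turnRate (h : IsOval ℓ γ) : Continuous (turnRate γ) := by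
  have h₁ := h.contDiff_deriv.continuous
  have h₂ := h.continuous_deriv_deriv
  refine Continuous.div ?_ (by fun_prop) fun t => (pow_pos (h.euclNorm_deriv_pos t) 2).ne'
  simp only [om_apply]
  fun_prop

lemma periodic_turnRate (h : IsOval ℓ γ) : Function.Periodic (turnRate γ) ℓ := fun t => by
  rw [turnRate, h.periodic_deriv, h.periodic_deriv_deriv, turnRate]

lemma exists_tangentAngle (h : IsOval ℓ γ) :
    ∃ θ : ℝ → ℝ, (∀ t, HasDerivAt θ (turnRate γ t) t) ∧
      ∀ t, deriv γ t = euclNorm (deriv γ t) • dir (θ t) := by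
  set e := Complex.equivRealProdCLM.symm
  obtain ⟨P, hP, hexp⟩ := exists_hasDerivAt_exp_eq (g := fun t => e (deriv γ t))
    (fun t => e.hasFDerivAt.comp_hasDerivAt t (h.hasDerivAt_deriv t))
    (e.continuous.comp h.continuous_deriv_deriv)
    (fun t => e.map_eq_zero_iff.not.2 (h.deriv_ne_zero t))
  refine ⟨fun t => (P t).im, fun t => ?_, fun t => ?_⟩
  · refine (Complex.imCLM.hasFDerivAt.comp_hasDerivAt t (hP t)).congr_deriv ?_
    rw [Complex.imCLM_apply, Complex.div_im, Complex.normSq_eq_norm_sq, ← sub_div, turnRate,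
      om_apply, mul_comm (deriv γ t).1]
    rfl
  · have hnorm : euclNorm (deriv γ t) = exp (P t).re := by
      rw [euclNorm, ← hexp, Complex.norm_exp]
    have hre := congrArg Complex.re (hexp t)
    have him := congrArg Complex.im (hexp t)
    rw [Complex.exp_re] at hre
    rw [Complex.exp_im] at him
    rw [hnorm]
    exact Prod.ext hre.symm him.symm

end IsOval

lemma exists_int_of_dir_eq {a b : ℝ} (h : dir a = dir b) : ∃ k : ℤ, a = b + k * (2 * π) := by
  have hangle := Real.Angle.cos_sin_inj (congrArg Prod.fst h) (congrArg Prod.snd h)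
  obtain ⟨k, hk⟩ := Real.Angle.angle_eq_iff_two_pi_dvd_sub.1 hangle
  exact ⟨k, by linarith⟩

lemma surjective_of_map_add_eq_add {f : ℝ → ℝ} (hf : Continuous f) {a b : ℝ} (hb : 0 < b)
    (hadd : ∀ x, f (x + a) = f x + b) : Function.Surjective f := by
  set F : AddConstMap ℝ ℝ a b := ⟨f, hadd⟩
  have hint : ∀ n : ℤ, f (n • a) = f 0 + n * b := fun n => by
    have hF := AddConstMapClass.map_add_zsmul F 0 n
    rwa [zero_add, zsmul_eq_mul b n] at hF
  intro y
  refine mem_range_of_exists_le_of_exists_ge hf ⟨⌊(y - f 0) / b⌋ • a, ?_⟩ ⟨⌈(y - f 0) / b⌉ • a, ?_⟩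
  · rw [hint]
    linarith [(le_div_iff₀ hb).1 (Int.floor_le ((y - f 0) / b))]
  · rw [hint]
    linarith [(div_le_iff₀ hb).1 (Int.le_ceil ((y - f 0) / b))]

/-- `τ φ` is a parameter at which the `ℓ`-periodic curve `γ` has tangent angle `φ`, chosen
continuously in `φ`; one period of `γ` turns the tangent by `T`. -/
structure IsAngleReparam (ℓ T : ℝ) (γ : ℝ → ℝ × ℝ) (τ : ℝ → ℝ) : Prop where
  surjective : Function.Surjective τ
  hasDerivAt : ∀ φ, HasDerivAt τ (turnRate γ (τ φ))⁻¹ φ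
  deriv_eq : ∀ φ, deriv γ (τ φ) = euclNorm (deriv γ (τ φ)) • dir φ
  map_add : ∀ φ, τ (φ + T) = τ φ + ℓ

namespace IsOval

variable {ℓ : ℝ} {γ : ℝ → ℝ × ℝ}

lemma exists_turning_number (h : IsOval ℓ γ) {θ : ℝ → ℝ}
    (hθ : ∀ t, HasDerivAt θ (turnRate γ t) t)
    (hdir : ∀ t, deriv γ t = euclNorm (deriv γ t) • dir (θ t)) :
    ∃ n : ℕ, 0 < n ∧ ∀ t, θ (t + ℓ) = θ t + n * (2 * π) := by
  have hderiv : ∀ t, HasDerivAt (fun t => θ (t + ℓ) - θ t) 0 t := fun t => by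
    refine (((hθ (t + ℓ)).comp_add_const t ℓ).sub (hθ t)).congr_deriv ?_
    rw [h.periodic_turnRate, sub_self]
  have hconst : ∀ t, θ (t + ℓ) - θ t = θ (0 + ℓ) - θ 0 := fun t =>
    is_const_of_deriv_eq_zero (fun t => (hderiv t).differentiableAt) (fun t => (hderiv t).deriv) t 0
  have hdir_eq : dir (θ (0 + ℓ)) = dir (θ 0) := by
    refine smul_right_injective _ (h.euclNorm_deriv_pos 0).ne' ?_
    simp only
    rw [← hdir, ← h.periodic_deriv, ← hdir]
  obtain ⟨k, hk⟩ := exists_int_of_dir_eq hdir_eq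
  have hlt : θ 0 < θ (0 + ℓ) :=
    strictMono_of_hasDerivAt_pos hθ h.turnRate_pos (lt_add_of_pos_right 0 h.pos)
  have hkpos : 0 < k := by
    rw [hk, lt_add_iff_pos_right, mul_pos_iff_of_pos_right two_pi_pos] at hlt
    exact_mod_cast hlt
  lift k to ℕ using hkpos.le
  refine ⟨k, by exact_mod_cast hkpos, fun t => ?_⟩
  rw [Int.cast_natCast] at hk
  linarith [hconst t]

lemma exists_angleReparam_turning_number (h : IsOval ℓ γ) :
    ∃ n : ℕ, 0 < n ∧ ∃ τ, IsAngleReparam ℓ (n * (2 * π)) γ τ := by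
  obtain ⟨θ, hθ, hdir⟩ := h.exists_tangentAngle
  obtain ⟨n, hn, hadd⟩ := h.exists_turning_number hθ hdir
  have hmono : StrictMono θ := strictMono_of_hasDerivAt_pos hθ h.turnRate_pos
  have hsurj : Function.Surjective θ :=
    surjective_of_map_add_eq_add (continuous_iff_continuousAt.2 fun t => (hθ t).continuousAt)
      (by positivity) hadd
  set e := hmono.orderIsoOfSurjective θ hsurj
  have hinv : ∀ φ, θ (e.symm φ) = φ := e.apply_symm_apply
  refine ⟨n, hn, e.symm, e.symm.surjective, fun φ => ?_, fun φ => ?_, fun φ => ?_⟩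
  · exact HasDerivAt.of_local_left_inverse e.symm.continuous.continuousAt (hθ _)
      (h.turnRate_pos _).ne' (Eventually.of_forall hinv)
  · simpa only [hinv] using hdir (e.symm φ)
  · exact hmono.injective (by rw [hadd, hinv, hinv])

end IsOval

namespace IsAngleReparam

variable {ℓ T : ℝ} {γ : ℝ → ℝ × ℝ} {τ : ℝ → ℝ}

lemma continuous (hτ : IsAngleReparam ℓ T γ τ) : Continuous τ :=
  continuous_iff_continuousAt.2 fun φ => (hτ.hasDerivAt φ).continuousAt

lemma isTangentAngleParam (hτ : IsAngleReparam ℓ T γ τ) (h : IsOval ℓ γ) :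
    IsTangentAngleParam T (fun φ => euclNorm (deriv γ (τ φ)) / turnRate γ (τ φ)) (γ ∘ τ) where
  pos φ := div_pos (h.euclNorm_deriv_pos _) (h.turnRate_pos _)
  continuous_radius :=
    ((continuous_euclNorm.comp h.contDiff_deriv.continuous).div h.continuous_turnRate
      fun t => (h.turnRate_pos t).ne').comp hτ.continuous
  hasDerivAt φ := by
    refine ((h.hasDerivAt (τ φ)).scomp φ (hτ.hasDerivAt φ)).congr_deriv ?_
    rw [hτ.deriv_eq, smul_smul, ← hτ.deriv_eq, inv_mul_eq_div]
  periodic φ := by rw [Function.comp_apply, hτ.map_add, h.periodic, Function.comp_apply]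

lemma injOn_Ico (hτ : IsAngleReparam ℓ T γ τ) (h : IsOval ℓ γ) (a : ℝ) :
    InjOn (γ ∘ τ) (Ico a (a + T)) := by
  have hmono : StrictMono τ :=
    strictMono_of_hasDerivAt_pos hτ.hasDerivAt fun φ => inv_pos.2 (h.turnRate_pos _)
  refine (injOn_Ico_of_periodic h.pos h.periodic h.injOn (τ a)).comp hmono.injective.injOn ?_
  intro φ hφ
  exact ⟨hmono.monotone hφ.1, hτ.map_add a ▸ hmono hφ.2⟩

end IsAngleReparam

lemma IsOval.exists_angleReparam {ℓ : ℝ} {γ : ℝ → ℝ × ℝ} (h : IsOval ℓ γ) :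
    ∃ τ, IsAngleReparam ℓ (2 * π) γ τ := by
  obtain ⟨n, hn, τ, hτ⟩ := h.exists_angleReparam_turning_number
  have hone := (hτ.isTangentAngleParam h).turning_number_eq_one hn rfl (hτ.injOn_Ico h)
  refine ⟨τ, ?_⟩
  simpa [hone] using hτ

lemma sub_eq_smul_dir {Γ : ℝ → ℝ × ℝ} {φ ψ₁ ψ₂ : ℝ} (h : height Γ φ ψ₁ = height Γ φ ψ₂) :
    Γ ψ₁ - Γ ψ₂ = (along Γ φ ψ₁ - along Γ φ ψ₂) • dir φ := by
  simp only [height_eq] at h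
  ext
  · simp only [along, dir, Prod.fst_sub, Prod.smul_fst, smul_eq_mul]
    linear_combination -sin φ * h - ((Γ ψ₁).1 - (Γ ψ₂).1) * sin_sq_add_cos_sq φ
  · simp only [along, dir, Prod.snd_sub, Prod.smul_snd, smul_eq_mul]
    linear_combination cos φ * h - ((Γ ψ₁).2 - (Γ ψ₂).2) * sin_sq_add_cos_sq φ

lemma L22_add_L11 (γ : ℝ → ℝ × ℝ) (r s t : ℝ) :
    L22 γ r s + L11 γ s t = om (deriv (deriv γ) s) (γ t - γ r) := by
  simp only [L22, L11, om_apply, Prod.fst_sub, Prod.snd_sub]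
  ring

namespace IsAngleReparam

variable {ℓ T : ℝ} {γ : ℝ → ℝ × ℝ} {τ : ℝ → ℝ}

lemma om_deriv (hτ : IsAngleReparam ℓ T γ τ) (φ : ℝ) (u : ℝ × ℝ) :
    om (deriv γ (τ φ)) u = euclNorm (deriv γ (τ φ)) * om (dir φ) u := by
  conv_lhs => rw [hτ.deriv_eq]
  simp only [om_apply, Prod.smul_fst, Prod.smul_snd, smul_eq_mul]
  ring

lemma L12_eq (hτ : IsAngleReparam ℓ T γ τ) (φ ψ : ℝ) :
    L12 γ (τ φ) (τ ψ) =
      euclNorm (deriv γ (τ φ)) * euclNorm (deriv γ (τ ψ)) * sin (ψ - φ) := by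
  rw [L12, hτ.om_deriv]
  conv_lhs => rw [hτ.deriv_eq ψ]
  simp only [om_apply, dir, Prod.smul_mk, smul_eq_mul, sin_sub]
  ring

lemma om_dir_deriv_deriv (hτ : IsAngleReparam ℓ T γ τ) (h : IsOval ℓ γ) (φ : ℝ) :
    om (dir φ) (deriv (deriv γ) (τ φ)) = euclNorm (deriv γ (τ φ)) * turnRate γ (τ φ) := by
  have hne := (h.euclNorm_deriv_pos (τ φ)).ne'
  rw [turnRate, hτ.om_deriv]
  field_simp

lemma L22_add_L11_eq (hτ : IsAngleReparam ℓ T γ τ) (h : IsOval ℓ γ) {φ ψ₁ ψ₂ : ℝ}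
    (hheight : height (γ ∘ τ) φ ψ₂ = height (γ ∘ τ) φ ψ₁) :
    L22 γ (τ ψ₁) (τ φ) + L11 γ (τ φ) (τ ψ₂) =
      -(euclNorm (deriv γ (τ φ)) * turnRate γ (τ φ)
        * (along (γ ∘ τ) φ ψ₂ - along (γ ∘ τ) φ ψ₁)) := by
  have hsub : γ (τ ψ₂) - γ (τ ψ₁) = (along (γ ∘ τ) φ ψ₂ - along (γ ∘ τ) φ ψ₁) • dir φ :=
    sub_eq_smul_dir hheight
  rw [L22_add_L11, hsub, ← hτ.om_dir_deriv_deriv h]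
  simp only [om_apply, Prod.smul_fst, Prod.smul_snd, smul_eq_mul]
  ring

lemma isConfiguration (hτ : IsAngleReparam ℓ T γ τ) (h : IsOval ℓ γ) {φ : ℤ → ℝ}
    (hsin : ∀ n, 0 < sin (φ (n + 1) - φ n))
    (hheight : ∀ n, height (γ ∘ τ) (φ n) (φ (n + 1)) = height (γ ∘ τ) (φ n) (φ (n - 1))) :
    IsConfiguration γ (τ ∘ φ) := by
  have hpos := fun φ => h.euclNorm_deriv_pos (τ φ)
  refine ⟨fun n => ?_, fun n => ?_⟩
  · have hL12 := mul_pos (mul_pos (hpos (φ n)) (hpos (φ (n + 1)))) (hsin n)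
    rwa [← hτ.L12_eq] at hL12
  · have hsub : γ (τ (φ (n + 1))) - γ (τ (φ (n - 1))) = _ := sub_eq_smul_dir (hheight n)
    simp only [Function.comp_apply]
    rw [hτ.om_deriv, hsub]
    simp only [om_apply, Prod.smul_fst, Prod.smul_snd, smul_eq_mul]
    ring

lemma noConjugatePointsAngle (hτ : IsAngleReparam ℓ T γ τ) (h : IsOval ℓ γ)
    (hnc : NoConjugatePoints γ) :
    NoConjugatePointsAngle (fun φ => euclNorm (deriv γ (τ φ)) / turnRate γ (τ φ)) (γ ∘ τ) := by
  intro φ hsin hheight ζ hζ hζ0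
  have hne : ∀ n, euclNorm (deriv γ (τ (φ n))) ≠ 0 := fun n => (h.euclNorm_deriv_pos _).ne'
  set ξ : ℤ → ℝ := fun n => ζ n / euclNorm (deriv γ (τ (φ n))) with hξ
  have hξ_eq_zero : ∀ n, ξ n = 0 ↔ ζ n = 0 := fun n => by simp [hξ, hne n]
  have hjacobi : IsJacobiField γ (τ ∘ φ) ξ := fun n => by
    simp only [Function.comp_apply]
    rw [hτ.L12_eq, hτ.L12_eq, hτ.L22_add_L11_eq h (hheight n)]
    have hζn := hζ n
    rw [div_div_eq_mul_div] at hζn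
    have h₁ := hne (n - 1)
    have h₂ := hne n
    have h₃ := hne (n + 1)
    simp only [hξ]
    field_simp at hζn ⊢
    linear_combination hζn
  have hξ0 : ξ ≠ 0 := fun h0 => hζ0 (funext fun n => (hξ_eq_zero n).1 (congrFun h0 n))
  simpa only [hξ_eq_zero] using hnc _ (hτ.isConfiguration h hsin hheight) ξ hjacobi hξ0

lemma integral_comp_div_turnRate (hτ : IsAngleReparam ℓ T γ τ) (h : IsOval ℓ γ) {F : ℝ → ℝ}
    (hF : Continuous F) (hper : Function.Periodic F ℓ) :
    ∫ φ in 0..T, F (τ φ) / turnRate γ (τ φ) = ∫ t in 0..ℓ, F t := by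
  have hrate : Continuous fun φ => (turnRate γ (τ φ))⁻¹ :=
    (h.continuous_turnRate.comp hτ.continuous).inv₀ fun φ => (h.turnRate_pos _).ne'
  calc ∫ φ in 0..T, F (τ φ) / turnRate γ (τ φ) = ∫ t in τ 0..τ T, F t :=
        intervalIntegral.integral_comp_mul_deriv (fun φ _ => hτ.hasDerivAt φ) hrate.continuousOn hF
    _ = ∫ t in τ 0..τ 0 + ℓ, F t := by rw [← hτ.map_add, zero_add]
    _ = ∫ t in 0..ℓ, F t := by rw [hper.intervalIntegral_add_eq (τ 0) 0, zero_add]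

lemma integral_radius_mul (hτ : IsAngleReparam ℓ T γ τ) (h : IsOval ℓ γ) {f : ℝ → ℝ}
    {F : ℝ × ℝ → ℝ} (hF : Continuous F) (hfF : ∀ r φ, F (r • dir φ) = r ^ 2 * f φ) :
    ∫ φ in 0..T, euclNorm (deriv γ (τ φ)) / turnRate γ (τ φ) * f φ =
      ∫ t in 0..ℓ, F (deriv γ t) / euclNorm (deriv γ t) := by
  have hne := fun t => (h.euclNorm_deriv_pos t).ne'
  have hcont := h.contDiff_deriv.continuous
  rw [← hτ.integral_comp_div_turnRate h (F := fun t => F (deriv γ t) / euclNorm (deriv γ t))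
    ((hF.comp hcont).div (by fun_prop) hne) fun t => by simp only [h.periodic_deriv t]]
  congr 1 with φ
  have hval : F (deriv γ (τ φ)) = euclNorm (deriv γ (τ φ)) ^ 2 * f φ := by
    rw [← hfF, ← hτ.deriv_eq]
  rw [hval]
  have := hne (τ φ)
  field_simp

end IsAngleReparam

/-- The two integral conditions say that the length of `γ` is stationary among the images of `γ`
under area preserving linear maps. -/
lemma IsOval.isEllipse_range_of_integral_eq_zero {ℓ : ℝ} {γ : ℝ → ℝ × ℝ} (h : IsOval ℓ γ)
    (hsq : ∫ t in 0..ℓ, ((deriv γ t).1 ^ 2 - (deriv γ t).2 ^ 2) / euclNorm (deriv γ t) = 0)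
    (hmul : ∫ t in 0..ℓ, (deriv γ t).1 * (deriv γ t).2 / euclNorm (deriv γ t) = 0)
    (hnc : NoConjugatePoints γ) : IsEllipse (range γ) := by
  obtain ⟨τ, hτ⟩ := h.exists_angleReparam
  rw [← hτ.surjective.range_comp γ]
  refine (hτ.isTangentAngleParam h).isEllipse_range_of_noConjugatePoints ?_ ?_
    (hτ.noConjugatePointsAngle h hnc)
  · rw [hτ.integral_radius_mul h (F := fun u => u.1 ^ 2 - u.2 ^ 2) (by fun_prop), hsq]
    intro r φ
    simp only [dir, Prod.smul_mk, smul_eq_mul, cos_two_mul']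
    ring
  · rw [hτ.integral_radius_mul h (F := fun u => 2 * (u.1 * u.2)) (by fun_prop)]
    · simp only [mul_div_assoc (2 : ℝ), intervalIntegral.integral_const_mul, hmul, mul_zero]
    intro r φ
    simp only [dir, Prod.smul_mk, smul_eq_mul, sin_two_mul]
    ring

lemma norm_add_smul_le {E : Type*} [NormedAddCommGroup E] [InnerProductSpace ℝ E] {u : E}
    (hu : u ≠ 0) (w : E) (s : ℝ) :
    ‖u + s • w‖ ≤ ‖u‖ + s * (inner ℝ u w / ‖u‖) + s ^ 2 * (‖w‖ ^ 2 / (2 * ‖u‖)) := by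
  have hpos := norm_pos_iff.2 hu
  have hsq : ‖u + s • w‖ ^ 2 = ‖u‖ ^ 2 + 2 * (s * inner ℝ u w) + s ^ 2 * ‖w‖ ^ 2 := by
    rw [norm_add_sq_real, real_inner_smul_right, norm_smul, mul_pow, norm_eq_abs, sq_abs]
  have hamgm : 2 * ‖u‖ * ‖u + s • w‖ ≤ ‖u‖ ^ 2 + ‖u + s • w‖ ^ 2 := two_mul_le_add_sq _ _
  refine le_of_mul_le_mul_left (a := 2 * ‖u‖) ?_ (by positivity)
  field_simp
  linarith

lemma integral_inner_div_norm_eq_zero_of_le {E : Type*} [NormedAddCommGroup E]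
    [InnerProductSpace ℝ E] {a b : ℝ} (hab : a ≤ b) {u w : ℝ → E} (hu : Continuous u)
    (hw : Continuous w) (hne : ∀ t, u t ≠ 0)
    (hmin : ∀ s : ℝ, ∫ t in a..b, ‖u t‖ ≤ ∫ t in a..b, ‖u t + s • w t‖) :
    ∫ t in a..b, inner ℝ (u t) (w t) / ‖u t‖ = 0 := by
  have hne' : ∀ t, ‖u t‖ ≠ 0 := fun t => norm_ne_zero_iff.2 (hne t)
  have : Continuous fun t => inner ℝ (u t) (w t) / ‖u t‖ := (hu.inner hw).div hu.norm hne'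
  have hsnd : Continuous fun t => ‖w t‖ ^ 2 / (2 * ‖u t‖) :=
    (hw.norm.pow 2).div (hu.norm.const_mul 2) fun t => mul_ne_zero two_ne_zero (hne' t)
  set A := ∫ t in a..b, inner ℝ (u t) (w t) / ‖u t‖
  set B := ∫ t in a..b, ‖w t‖ ^ 2 / (2 * ‖u t‖)
  have hquad : ∀ s : ℝ, 0 ≤ B * (s * s) + A * s + 0 := fun s => by
    have hle : ∫ t in a..b, ‖u t + s • w t‖ ≤ (∫ t in a..b, ‖u t‖) + s * A + s ^ 2 * B := by
      rw [← intervalIntegral.integral_const_mul, ← intervalIntegral.integral_const_mul,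
        ← intervalIntegral.integral_add, ← intervalIntegral.integral_add]
      · refine intervalIntegral.integral_mono_on hab ?_ ?_ fun t _ => norm_add_smul_le (hne t) _ s
        all_goals exact Continuous.intervalIntegrable (by fun_prop) _ _
      all_goals exact Continuous.intervalIntegrable (by fun_prop) _ _
    linarith [hmin s]
  have hdiscrim : A ^ 2 ≤ 0 := by simpa [discrim] using discrim_le_zero hquad
  exact pow_eq_zero_iff two_ne_zero |>.1 (hdiscrim.antisymm (sq_nonneg A))

lemma exists_isMinOn_of_homogeneous {E : Type*} [NormedAddCommGroup E] [NormedSpace ℝ E]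
    [FiniteDimensional ℝ E] [Nontrivial E] {F : E → ℝ} (hF : Continuous F)
    (hsmul : ∀ (r : ℝ) (x : E), F (r • x) = |r| * F x) (hpos : ∀ x ≠ 0, 0 < F x) {s : Set E}
    (hs : IsClosed s) (hne : s.Nonempty) : ∃ x ∈ s, IsMinOn F s x := by
  have : ProperSpace E := FiniteDimensional.proper_real E
  obtain ⟨x₀, hx₀, hmin⟩ := (isCompact_sphere (0 : E) 1).exists_isMinOn
    (NormedSpace.sphere_nonempty.2 zero_le_one) hF.continuousOn
  have hk : 0 < F x₀ := hpos x₀ (ne_zero_of_mem_unit_sphere ⟨x₀, hx₀⟩)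
  have hlower : ∀ x, F x₀ * ‖x‖ ≤ F x := fun x => by
    rcases eq_or_ne x 0 with rfl | hx
    · simpa using (hsmul 0 0).ge
    · have hunit : F x₀ ≤ F (‖x‖⁻¹ • x) := hmin (by simp [norm_smul, hx])
      rwa [hsmul, abs_of_nonneg (by positivity), le_inv_mul_iff₀ (norm_pos_iff.2 hx),
        mul_comm] at hunit
  obtain ⟨y, hy⟩ := hne
  refine hF.continuousOn.exists_isMinOn' hs hy (Eventually.filter_mono inf_le_left ?_)
  filter_upwards [(tendsto_norm_cocompact_atTop (E := E)).eventually_ge_atTop (F y / F x₀)]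
    with x hx
  exact ((div_le_iff₀' hk).1 hx).trans (hlower x)

/-- `A` preserves the area form of the plane. -/
def IsAreaPreserving (A : ℝ × ℝ →L[ℝ] ℝ × ℝ) : Prop :=
  ∀ u v, om (A u) (A v) = om u v

/-- The linear shear `u ↦ u + s • om w u • w` in the direction of `w`. -/
noncomputable def shear (w : ℝ × ℝ) (s : ℝ) : ℝ × ℝ →L[ℝ] ℝ × ℝ :=
  .id ℝ _ + s • (w.1 • ContinuousLinearMap.snd ℝ ℝ ℝ - w.2 • .fst ℝ ℝ ℝ).smulRight w

lemma shear_apply (w : ℝ × ℝ) (s : ℝ) (u : ℝ × ℝ) : shear w s u = u + s • om w u • w := by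
  simp [shear, om_apply, mul_comm]

lemma om_smul_eq (u v x : ℝ × ℝ) : om u v • x = om x v • u + om u x • v := by
  ext <;>
  · simp only [om_apply, Prod.fst_add, Prod.snd_add, Prod.smul_fst, Prod.smul_snd, smul_eq_mul]
    ring

lemma continuous_om : Continuous fun x : (ℝ × ℝ) × (ℝ × ℝ) => om x.1 x.2 := by
  simp only [om_apply]
  fun_prop

lemma isClosed_setOf_isAreaPreserving : IsClosed {A | IsAreaPreserving A} := by
  simp only [IsAreaPreserving, ofPred_forall]
  refine isClosed_iInter fun u => isClosed_iInter fun v => isClosed_eq ?_ continuous_const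
  exact continuous_om.comp (by fun_prop : Continuous fun A : ℝ × ℝ →L[ℝ] ℝ × ℝ => (A u, A v))

namespace IsAreaPreserving

variable {A B : ℝ × ℝ →L[ℝ] ℝ × ℝ}

lemma id : IsAreaPreserving (.id ℝ (ℝ × ℝ)) := fun _ _ => rfl

lemma comp (hA : IsAreaPreserving A) (hB : IsAreaPreserving B) : IsAreaPreserving (A ∘L B) :=
  fun u v => (hA (B u) (B v)).trans (hB u v)

lemma shear (w : ℝ × ℝ) (s : ℝ) : IsAreaPreserving (shear w s) := fun u v => by
  simp only [shear_apply, om_apply, Prod.fst_add, Prod.snd_add, Prod.smul_fst, Prod.smul_snd,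
    smul_eq_mul]
  ring

lemma injective (hA : IsAreaPreserving A) : Function.Injective A := by
  refine (injective_iff_map_eq_zero A).2 fun u hu => ?_
  have hom : ∀ v, om u v = 0 := fun v => by rw [← hA, hu, om_apply]; simp
  have h₁ := hom (0, 1)
  have h₂ := hom (1, 0)
  simp only [om_apply] at h₁ h₂
  ext
  · simpa using h₁
  · simpa using h₂

end IsAreaPreserving

namespace IsOval

variable {ℓ : ℝ} {γ : ℝ → ℝ × ℝ}

lemma deriv_map (h : IsOval ℓ γ) (A : ℝ × ℝ →L[ℝ] ℝ × ℝ) : deriv (A ∘ γ) = A ∘ deriv γ :=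
  funext fun t => (A.hasFDerivAt.comp_hasDerivAt t (h.hasDerivAt t)).deriv

lemma deriv_deriv_map (h : IsOval ℓ γ) (A : ℝ × ℝ →L[ℝ] ℝ × ℝ) :
    deriv (deriv (A ∘ γ)) = A ∘ deriv (deriv γ) := by
  rw [h.deriv_map]
  exact funext fun t => (A.hasFDerivAt.comp_hasDerivAt t (h.hasDerivAt_deriv t)).deriv

lemma map (h : IsOval ℓ γ) {A : ℝ × ℝ →L[ℝ] ℝ × ℝ} (hA : IsAreaPreserving A) :
    IsOval ℓ (A ∘ γ) where
  pos := h.pos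
  contDiff := A.contDiff.comp h.contDiff
  periodic := h.periodic.comp A
  injOn := hA.injective.comp_injOn h.injOn
  om_pos t := by
    rw [h.deriv_deriv_map, h.deriv_map]
    exact (hA _ _).symm ▸ h.om_pos t

lemma noConjugatePoints_map (h : IsOval ℓ γ) {A : ℝ × ℝ →L[ℝ] ℝ × ℝ} (hA : IsAreaPreserving A)
    (hnc : NoConjugatePoints γ) : NoConjugatePoints (A ∘ γ) := by
  intro t ht ξ hξ
  refine hnc t ?_ ξ ?_
  · simpa only [IsConfiguration, h.deriv_map, Function.comp_apply, ← map_sub, hA _ _] using ht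
  · simpa only [IsJacobiField, L12, L22, L11, h.deriv_deriv_map, congrFun (h.deriv_map A) _,
      Function.comp_apply, hA _ _] using hξ

lemma exists_map_deriv_ne_zero (h : IsOval ℓ γ) {A : ℝ × ℝ →L[ℝ] ℝ × ℝ} (hA : A ≠ 0) :
    ∃ t ∈ Ico 0 ℓ, A (deriv γ t) ≠ 0 := by
  by_contra! hzero
  have hderiv : ∀ t, A (deriv γ t) = 0 := fun t => by
    obtain ⟨s, hs, hst⟩ := h.periodic_deriv.exists_mem_Ico₀ h.pos t
    rw [hst, hzero s hs]
  have hderiv₂ : A (deriv (deriv γ) 0) = 0 := by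
    have hcomp := (A.hasFDerivAt.comp_hasDerivAt 0 (h.hasDerivAt_deriv 0)).deriv
    rw [← hcomp, show A ∘ deriv γ = fun _ => 0 from funext hderiv, deriv_const]
  refine hA (ContinuousLinearMap.ext fun x => ?_)
  have hsmul := congrArg A (om_smul_eq (deriv γ 0) (deriv (deriv γ) 0) x)
  rw [map_add, map_smul, map_smul, map_smul, hderiv, hderiv₂, smul_zero, smul_zero, add_zero]
    at hsmul
  exact (smul_eq_zero.1 hsmul).resolve_left (h.om_pos 0).ne'

lemma exists_isMinOn_length (h : IsOval ℓ γ) :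
    ∃ A, IsAreaPreserving A ∧ ∀ B, IsAreaPreserving B →
      ∫ t in 0..ℓ, euclNorm (A (deriv γ t)) ≤ ∫ t in 0..ℓ, euclNorm (B (deriv γ t)) := by
  have hγ' := h.contDiff_deriv.continuous
  refine exists_isMinOn_of_homogeneous ?_ ?_ ?_ isClosed_setOf_isAreaPreserving
    ⟨_, IsAreaPreserving.id⟩
  · refine intervalIntegral.continuous_parametric_intervalIntegral_of_continuous' ?_ _ _
    simp only [Function.uncurry_def]
    fun_prop
  · intro r A
    simp only [← intervalIntegral.integral_const_mul]
    congr 1 with t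
    simp [euclNorm]
  · intro A hA
    obtain ⟨t, ht, hne⟩ := h.exists_map_deriv_ne_zero hA
    exact intervalIntegral.integral_pos h.pos (by fun_prop) (fun t _ => norm_nonneg _)
      ⟨t, Ico_subset_Icc_self ht, euclNorm_pos.2 hne⟩

lemma integral_om_mul_eq_zero_of_isMinOn_length (h : IsOval ℓ γ)
    (hmin : ∀ A, IsAreaPreserving A →
      ∫ t in 0..ℓ, euclNorm (deriv γ t) ≤ ∫ t in 0..ℓ, euclNorm (A (deriv γ t))) (w : ℝ × ℝ) :
    ∫ t in 0..ℓ, om w (deriv γ t) * (w.1 * (deriv γ t).1 + w.2 * (deriv γ t).2) /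
      euclNorm (deriv γ t) = 0 := by
  set e := Complex.equivRealProdCLM.symm
  have hγ' := h.contDiff_deriv.continuous
  have hom : Continuous fun t => om w (deriv γ t) := by
    simp only [om_apply]
    fun_prop
  have hzero := integral_inner_div_norm_eq_zero_of_le h.pos.le (u := fun t => e (deriv γ t))
    (w := fun t => om w (deriv γ t) • e w) (by fun_prop) (by fun_prop)
    (fun t => e.map_eq_zero_iff.not.2 (h.deriv_ne_zero t)) fun s => by
      simpa only [euclNorm, shear_apply, map_add, map_smul] using hmin _ (.shear w s)
  rw [← hzero]
  congr 1 with t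
  rw [real_inner_smul_right, euclNorm, Complex.inner]
  simp [e]

lemma isEllipse_range_of_isMinOn_length (h : IsOval ℓ γ)
    (hmin : ∀ A, IsAreaPreserving A →
      ∫ t in 0..ℓ, euclNorm (deriv γ t) ≤ ∫ t in 0..ℓ, euclNorm (A (deriv γ t)))
    (hnc : NoConjugatePoints γ) : IsEllipse (range γ) := by
  have hvar := h.integral_om_mul_eq_zero_of_isMinOn_length hmin
  refine h.isEllipse_range_of_integral_eq_zero ?_ ?_ hnc
  · refine neg_eq_zero.1 (Eq.trans ?_ (hvar (1, 1)))
    rw [← intervalIntegral.integral_neg]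
    refine intervalIntegral.integral_congr fun t _ => ?_
    simp only [om_apply]
    ring
  · refine Eq.trans (intervalIntegral.integral_congr fun t _ => ?_) (hvar (1, 0))
    simp only [om_apply]
    ring

lemma isEllipse_range (h : IsOval ℓ γ) (hnc : NoConjugatePoints γ) : IsEllipse (range γ) := by
  obtain ⟨A, hA, hmin⟩ := h.exists_isMinOn_length
  have hellipse : IsEllipse (range (A ∘ γ)) := by
    refine (h.map hA).isEllipse_range_of_isMinOn_length (fun B hB => ?_)
      (h.noConjugatePoints_map hA hnc)
    simpa only [h.deriv_map] using! hmin _ (hB.comp hA)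
  let e := LinearEquiv.ofInjectiveEndo (A : ℝ × ℝ →ₗ[ℝ] ℝ × ℝ) hA.injective
  have himage : e.symm.toAffineEquiv '' range (A ∘ γ) = range γ := by
    rw [← range_comp]
    exact congrArg range (funext fun t => e.symm_apply_apply (γ t))
  exact himage ▸ hellipse.image e.symm.toAffineEquiv

end IsOval

end SymplecticBilliard

theorem symplectic_billiard_without_conjugate_points_is_ellipse_general
    (ℓ : ℝ) (hℓ : 0 < ℓ) (γ : ℝ → ℝ × ℝ)
    (hsmooth : ContDiff ℝ 2 γ)
    (hper : ∀ t, γ (t + ℓ) = γ t)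
    (hinj : InjOn γ (Ico 0 ℓ))
    (hcurv : ∀ t, 0 < om (deriv γ t) (deriv (deriv γ) t))
    (hnoconj : ∀ t : ℤ → ℝ, IsConfiguration γ t →
      ∀ ξ : ℤ → ℝ, IsJacobiField γ t ξ → ξ ≠ 0 →
        ¬ ∃ M N : ℤ, M < N ∧ ξ M = 0 ∧ ξ N = 0) :
    ∃ f : (ℝ × ℝ) ≃ᵃ[ℝ] (ℝ × ℝ), range γ = f '' unitCircle :=
  SymplecticBilliard.IsOval.isEllipse_range ⟨hℓ, hsmooth, hper, hinj, hcurv⟩ hnoconj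

/-- The only symplectic billiards without conjugate points are elliptic billiards. -/
theorem symplectic_billiard_without_conjugate_points_is_ellipse
    (ℓ : ℝ) (hℓ : 0 < ℓ) (γ : ℝ → ℝ × ℝ)
    (hsmooth : ContDiff ℝ (⊤ : ℕ∞) γ)
    (hper : ∀ t, γ (t + ℓ) = γ t)
    (hinj : InjOn γ (Ico 0 ℓ))
    (hcurv : ∀ t, 0 < om (deriv γ t) (deriv (deriv γ) t))
    (hnoconj : ∀ t : ℤ → ℝ, IsConfiguration γ t →
      ∀ ξ : ℤ → ℝ, IsJacobiField γ t ξ → ξ ≠ 0 →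
        ¬ ∃ M N : ℤ, M < N ∧ ξ M = 0 ∧ ξ N = 0) :
    ∃ f : (ℝ × ℝ) ≃ᵃ[ℝ] (ℝ × ℝ), range γ = f '' unitCircle :=
  symplectic_billiard_without_conjugate_points_is_ellipse_general ℓ hℓ γ
    (contDiff_infty.1 hsmooth 2) hper hinj hcurv hnoconj
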